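/- Let h ∈ ℝ[x₁,…,xₙ] be a homogeneous polynomial that is hyperbolic with respect to e ∈ ℝⁿ. If every non-zero point in the boundary of the hyperbolicity cone Λ_e(h) is a smooth point of h (i.e., a point of multiplicity 1 of h), then Λ_e(h) is a spectrahedral shadow, i.e., the image under a linear map of a set of the form {a ∈ ℝᵐ : a₁M₁ + ⋯ + aₘMₘ is positive semidefinite} for real symmetric matrices M₁,…,Mₘ. -/

import Mathlib

open MvPolynomial

/-- The univariate polynomial `t ↦ h(a + t·v)` obtained by restricting a multivariate
polynomial `h` to the line through `a` with direction `v`. -/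
noncomputable def linePoly {n : ℕ} (h : MvPolynomial (Fin n) ℝ) (a v : Fin n → ℝ) :
    Polynomial ℝ :=
  MvPolynomial.aeval (fun i => Polynomial.C (a i) + Polynomial.C (v i) * Polynomial.X) h

/-- A real univariate polynomial has only real roots. -/
def RealRooted (q : Polynomial ℝ) : Prop :=
  ∀ z : ℂ, Polynomial.aeval z q = 0 → z.im = 0

/-- A real univariate polynomial has only non-negative real roots. -/
def NonnegRealRooted (q : Polynomial ℝ) : Prop :=
  ∀ z : ℂ, Polynomial.aeval z q = 0 → z.im = 0 ∧ 0 ≤ z.re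

/-- `h` is hyperbolic in direction `e`: `h(e) ≠ 0` and for all `a` the univariate
polynomial `t ↦ h(a - t·e)` has only real roots. -/
def IsHyperbolic {n : ℕ} (h : MvPolynomial (Fin n) ℝ) (e : Fin n → ℝ) : Prop :=
  MvPolynomial.eval e h ≠ 0 ∧ ∀ a : Fin n → ℝ, RealRooted (linePoly h a (-e))

/-- The hyperbolicity cone `Λ_e(h)`. -/
def hypCone {n : ℕ} (h : MvPolynomial (Fin n) ℝ) (e : Fin n → ℝ) : Set (Fin n → ℝ) :=
  {a | NonnegRealRooted (linePoly h a (-e))}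

/-- multiplicity (order of vanishing) of `h` at `a`: the smallest `m` such that the
degree-`m` homogeneous component of `h(x + a)` is non-zero. -/
noncomputable def multAt {n : ℕ} (h : MvPolynomial (Fin n) ℝ) (a : Fin n → ℝ) : ℕ :=
  sInf {m | MvPolynomial.homogeneousComponent m
    (MvPolynomial.aeval (fun i => MvPolynomial.X i + MvPolynomial.C (a i)) h) ≠ 0}

/-- `p` is a real-zero polynomial with respect to `e`. -/
def IsRealZero {n : ℕ} (p : MvPolynomial (Fin n) ℝ) (e : Fin n → ℝ) : Prop :=
  MvPolynomial.eval e p ≠ 0 ∧ ∀ v : Fin n → ℝ, RealRooted (linePoly p e v)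

/-- The rigidly convex set `S_e(p)` of a real-zero polynomial. -/
def rigidSet {n : ℕ} (p : MvPolynomial (Fin n) ℝ) (e : Fin n → ℝ) : Set (Fin n → ℝ) :=
  {a | ∀ t : ℝ, 0 ≤ t → t < 1 → ¬ (linePoly p e (a - e)).IsRoot t}

/-- A polynomial is strictly quasi-concave at `a` if its Hessian at `a` is negative
definite on the orthogonal complement of its gradient at `a`. -/
def StrictQuasiConcaveAt {n : ℕ} (g : MvPolynomial (Fin n) ℝ) (a : Fin n → ℝ) : Prop :=
  ∀ v : Fin n → ℝ, v ≠ 0 →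
    (∑ i, v i * MvPolynomial.eval a (MvPolynomial.pderiv i g)) = 0 →
    (∑ i, ∑ j, v i * v j *
      MvPolynomial.eval a (MvPolynomial.pderiv i (MvPolynomial.pderiv j g))) < 0

/-- A spectrahedral shadow (cone version): a linear image of
`{a : a₁M₁ + ⋯ + aₘMₘ ⪰ 0}` for real symmetric matrices `Mᵢ`. -/
def IsSpectrahedralShadowCone {n : ℕ} (S : Set (Fin n → ℝ)) : Prop :=
  ∃ (m d : ℕ) (M : Fin m → Matrix (Fin d) (Fin d) ℝ)
    (L : (Fin m → ℝ) →ₗ[ℝ] (Fin n → ℝ)),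
      (∀ i, (M i).IsSymm) ∧ S = L '' {a | (∑ i, a i • M i).PosSemidef}

/-- A spectrahedral shadow: a linear image of
`{b : M₀ + b₁M₁ + ⋯ + bₘMₘ ⪰ 0}` for real symmetric matrices `Mᵢ`. -/
def IsSpectrahedralShadow {n : ℕ} (S : Set (Fin n → ℝ)) : Prop :=
  ∃ (m d : ℕ) (M₀ : Matrix (Fin d) (Fin d) ℝ) (M : Fin m → Matrix (Fin d) (Fin d) ℝ)
    (L : (Fin m → ℝ) →ₗ[ℝ] (Fin n → ℝ)),
      M₀.IsSymm ∧ (∀ i, (M i).IsSymm) ∧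
      S = L '' {b | (M₀ + ∑ i, b i • M i).PosSemidef}

/-- A convex set is pointed if it contains no affine line. -/
def PointedSet {n : ℕ} (S : Set (Fin n → ℝ)) : Prop :=
  ¬ ∃ (a v : Fin n → ℝ), v ≠ 0 ∧ ∀ t : ℝ, a + t • v ∈ S

/-- Directional derivative `∂_e h = Σᵢ eᵢ ∂h/∂xᵢ`. -/
noncomputable def dirDeriv {n : ℕ} (e : Fin n → ℝ) (h : MvPolynomial (Fin n) ℝ) :
    MvPolynomial (Fin n) ℝ :=
  ∑ i, e i • MvPolynomial.pderiv i h

/-- Coordinate-free spectrahedral shadow cones. -/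
def Shd {n : ℕ} (S : Set (Fin n → ℝ)) : Prop :=
  ∃ (V : Type) (_ : AddCommGroup V) (_ : Module ℝ V) (_ : FiniteDimensional ℝ V)
    (ι : Type) (_ : Fintype ι) (A : V →ₗ[ℝ] Matrix ι ι ℝ) (L : V →ₗ[ℝ] (Fin n → ℝ)),
      (∀ a, (A a).IsSymm) ∧ S = L '' {a | (A a).PosSemidef}

theorem Shd.toCone {n : ℕ} {S : Set (Fin n → ℝ)} (h : Shd S) : IsSpectrahedralShadowCone S := by
  obtain ⟨V, _, _, _, ι, _, A, L, hA, rfl⟩ := h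
  classical
  let b := Module.finBasis ℝ V
  let eι := Fintype.equivFin ι
  refine ⟨Module.finrank ℝ V, Fintype.card ι, fun i => (A (b i)).submatrix eι.symm eι.symm,
    L ∘ₗ b.equivFun.symm.toLinearMap, fun i => ?_, ?_⟩
  · exact (hA (b i)).submatrix _
  · have key : ∀ a : Fin (Module.finrank ℝ V) → ℝ,
        (∑ i, a i • (A (b i)).submatrix eι.symm eι.symm) =
          (A (b.equivFun.symm a)).submatrix eι.symm eι.symm := by
      intro a
      rw [Module.Basis.equivFun_symm_apply]
      ext x y
      simp [Matrix.sum_apply, map_sum]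
    ext x
    constructor
    · rintro ⟨w, hw, rfl⟩
      refine ⟨b.equivFun w, ?_, by simp⟩
      simp only [Set.mem_ofPred_eq, key]
      simpa using (Matrix.PosSemidef.submatrix hw eι.symm)
    · rintro ⟨a, ha, rfl⟩
      refine ⟨b.equivFun.symm a, ?_, by simp⟩
      simp only [Set.mem_ofPred_eq, key] at ha
      exact (Matrix.posSemidef_submatrix_equiv eι.symm).1 ha

theorem Shd.zero_mem {n : ℕ} {S : Set (Fin n → ℝ)} (h : Shd S) : 0 ∈ S := by
  obtain ⟨V, _, _, _, ι, _, A, L, hA, rfl⟩ := h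
  exact ⟨0, by simp [Matrix.PosSemidef.zero], by simp⟩

theorem Shd.smul_mem {n : ℕ} {S : Set (Fin n → ℝ)} (h : Shd S) {x : Fin n → ℝ} (hx : x ∈ S)
    {c : ℝ} (hc : 0 ≤ c) : c • x ∈ S := by
  obtain ⟨V, _, _, _, ι, _, A, L, hA, rfl⟩ := h
  obtain ⟨a, ha, rfl⟩ := hx
  exact ⟨c • a, by simpa using Matrix.PosSemidef.smul ha hc, by simp⟩

theorem Shd.add_mem {n : ℕ} {S : Set (Fin n → ℝ)} (h : Shd S) {x y : Fin n → ℝ} (hx : x ∈ S)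
    (hy : y ∈ S) : x + y ∈ S := by
  obtain ⟨V, _, _, _, ι, _, A, L, hA, rfl⟩ := h
  obtain ⟨a, ha, rfl⟩ := hx
  obtain ⟨b, hb, rfl⟩ := hy
  exact ⟨a + b, by simpa using Matrix.PosSemidef.add ha hb, by simp⟩

theorem psd_fromBlocks {ι κ : Type} [Fintype ι] [Fintype κ] {A : Matrix ι ι ℝ} {B : Matrix κ κ ℝ}
    (hA : A.PosSemidef) (hB : B.PosSemidef) : (Matrix.fromBlocks A 0 0 B).PosSemidef := by
  rw [Matrix.posSemidef_iff_dotProduct_mulVec] at *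
  refine ⟨?_, fun x => ?_⟩
  · exact Matrix.IsHermitian.fromBlocks hA.1 (by simp) hB.1
  · have h1 := hA.2 (x ∘ Sum.inl)
    have h2 := hB.2 (x ∘ Sum.inr)
    simp only [Matrix.fromBlocks_mulVec, dotProduct, Fintype.sum_sum_type, Sum.elim_inl,
      Sum.elim_inr, Matrix.zero_mulVec, add_zero, zero_add] at *
    exact add_nonneg h1 h2

theorem psd_blockDiagonal {ι J : Type} [Fintype ι] [Fintype J] [DecidableEq J]
    {M : J → Matrix ι ι ℝ}
    (hM : ∀ j, (M j).PosSemidef) : (Matrix.blockDiagonal M).PosSemidef := by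
  rw [Matrix.posSemidef_iff_dotProduct_mulVec]
  refine ⟨?_, fun x => ?_⟩
  · unfold Matrix.IsHermitian
    rw [Matrix.blockDiagonal_conjTranspose]
    congr 1
    ext1 j
    exact (hM j).1
  · have h1 : ∀ j, 0 ≤ star (fun i => x (i, j)) ⬝ᵥ (M j).mulVec (fun i => x (i, j)) :=
      fun j => (hM j).dotProduct_mulVec_nonneg _
    have h2 := Finset.sum_nonneg (fun j (_ : j ∈ Finset.univ) => h1 j)
    convert h2 using 1
    simp only [dotProduct, Matrix.mulVec, Fintype.sum_prod_type, Matrix.blockDiagonal_apply]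
    rw [Finset.sum_comm]
    refine Finset.sum_congr rfl fun j _ => Finset.sum_congr rfl fun i _ => ?_
    simp [ite_mul]

theorem Shd.add {n : ℕ} {S T : Set (Fin n → ℝ)} (hS : Shd S) (hT : Shd T) :
    Shd {z | ∃ x ∈ S, ∃ y ∈ T, z = x + y} := by
  obtain ⟨V, _, _, _, ι, _, A, L, hA, rfl⟩ := hS
  obtain ⟨V', _, _, _, ι', _, A', L', hA', rfl⟩ := hT
  classical
  refine ⟨V × V', inferInstance, inferInstance, inferInstance, ι ⊕ ι', inferInstance,
    { toFun := fun p => Matrix.fromBlocks (A p.1) 0 0 (A' p.2)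
      map_add' := fun p q => by simp [Matrix.fromBlocks_add]
      map_smul' := fun c p => by simp [Matrix.fromBlocks_smul] },
    L.coprod L', fun a => ?_, ?_⟩
  · exact Matrix.IsSymm.fromBlocks (hA _) (by simp) (hA' _)
  · ext z
    constructor
    · rintro ⟨_, ⟨a, ha, rfl⟩, _, ⟨b, hb, rfl⟩, rfl⟩
      exact ⟨(a, b), psd_fromBlocks ha hb, by simp⟩
    · rintro ⟨⟨a, b⟩, hab, rfl⟩
      refine ⟨_, ⟨a, ?_, rfl⟩, _, ⟨b, ?_, rfl⟩, by simp⟩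
      · exact Matrix.PosSemidef.submatrix hab Sum.inl
      · exact Matrix.PosSemidef.submatrix hab Sum.inr

theorem Shd.ray {n : ℕ} (e : Fin n → ℝ) : Shd {x | ∃ t : ℝ, 0 ≤ t ∧ x = t • e} := by
  refine ⟨ℝ, inferInstance, inferInstance, inferInstance, Unit, inferInstance,
    LinearMap.toSpanSingleton ℝ _ 1, LinearMap.toSpanSingleton ℝ _ e, fun a => ?_, ?_⟩
  · simp [Matrix.IsSymm]
  · ext x
    constructor
    · rintro ⟨t, ht, rfl⟩
      exact ⟨t, by simpa using Matrix.PosSemidef.smul Matrix.PosSemidef.one ht, by simp⟩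
    · rintro ⟨t, ht, rfl⟩
      refine ⟨t, ?_, by simp⟩
      have := Matrix.PosSemidef.diag_nonneg (i := ()) ht
      simpa using this

/-- A half space `{x | 0 ≤ ψ x}`. -/
theorem Shd.halfSpace {n : ℕ} (ψ : (Fin n → ℝ) →ₗ[ℝ] ℝ) : Shd {x | 0 ≤ ψ x} := by
  refine ⟨Fin n → ℝ, inferInstance, inferInstance, inferInstance, Unit, inferInstance,
    (LinearMap.toSpanSingleton ℝ _ 1) ∘ₗ ψ, LinearMap.id, fun a => ?_, ?_⟩
  · simp [Matrix.IsSymm]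
  · ext x
    constructor
    · intro hx
      exact ⟨x, by simpa using Matrix.PosSemidef.smul Matrix.PosSemidef.one hx, by simp⟩
    · rintro ⟨t, ht, rfl⟩
      have := Matrix.PosSemidef.diag_nonneg (i := ()) ht
      simpa using this

theorem psd_pair {n : ℕ} {B M : Matrix (Fin n) (Fin n) ℝ}
    (hB : ∀ ξ : Fin n → ℝ, 0 ≤ ∑ a, ∑ b, B a b * (ξ a * ξ b)) (hM : M.PosSemidef) :
    0 ≤ ∑ a, ∑ b, B a b * M a b := by
  obtain ⟨m, A, rfl⟩ := Matrix.posSemidef_iff_eq_sum_vecMulVec.mp hM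
  have : ∑ a, ∑ b, B a b * (∑ i, Matrix.vecMulVec (A i) (star (A i)) : Matrix _ _ ℝ) a b
      = ∑ i, ∑ a, ∑ b, B a b * (A i a * A i b) := by
    rw [Finset.sum_comm]
    conv_rhs => rw [Finset.sum_comm]; enter [2, a]; rw [Finset.sum_comm]
    rw [Finset.sum_comm]
    refine Finset.sum_congr rfl fun a _ => Finset.sum_congr rfl fun b _ => ?_
    simp [Matrix.sum_apply, Matrix.vecMulVec_apply, Finset.mul_sum]
  rw [this]
  exact Finset.sum_nonneg fun i _ => hB _

/-- Moment lifting: from a positive semidefinite matrix valued map on `K`. -/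
theorem Shd.lift {n : ℕ} {J : Type} [Fintype J] (K : Set (Fin n → ℝ))
    (F : J → (Fin n → ℝ) → Matrix (Fin n) (Fin n) ℝ) (hF : ∀ j, ∀ x ∈ K, (F j x).PosSemidef) :
    ∃ T, Shd T ∧ K ⊆ T ∧ ∀ (l : (Fin n → ℝ) →ₗ[ℝ] ℝ) (B : J → Matrix (Fin n) (Fin n) ℝ),
      (∀ j, ∀ ξ : Fin n → ℝ, 0 ≤ ∑ a, ∑ b, B j a b * (ξ a * ξ b)) →
      (∀ x ∈ K, l x = ∑ j, ∑ a, ∑ b, B j a b * F j x a b) → ∀ x ∈ T, 0 ≤ l x := by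
  classical
  let V : Submodule ℝ ((Fin n → ℝ) × (J → Matrix (Fin n) (Fin n) ℝ)) := Submodule.span ℝ ((fun x => (x, fun j => F j x)) '' K)
  have hsymm : ∀ w ∈ V, ∀ j, (w.2 j).IsSymm := by
    intro w hw
    induction hw using Submodule.span_induction with
    | mem w hw =>
      obtain ⟨x, hx, rfl⟩ := hw
      intro j
      have := (hF j x hx).1
      simpa [Matrix.IsHermitian, Matrix.IsSymm, Matrix.conjTranspose_eq_transpose_of_trivial]
        using this
    | zero => intro j; simp [Matrix.IsSymm]
    | add x y _ _ hx hy => intro j; exact (hx j).add (hy j)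
    | smul c x _ hx => intro j; exact (hx j).smul c
  let A : ((Fin n → ℝ) × (J → Matrix (Fin n) (Fin n) ℝ)) →ₗ[ℝ] Matrix (Fin n × J) (Fin n × J) ℝ :=
    { toFun := fun w => Matrix.blockDiagonal w.2
      map_add' := fun p q => by simp [Matrix.blockDiagonal_add]
      map_smul' := fun c p => by simp [Matrix.blockDiagonal_smul] }
  refine ⟨_, ⟨V, inferInstance, inferInstance, inferInstance, Fin n × J, inferInstance,
    A ∘ₗ V.subtype, (LinearMap.fst ℝ _ _) ∘ₗ V.subtype, fun a => ?_, rfl⟩, ?_, ?_⟩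
  · change (Matrix.blockDiagonal a.1.2).IsSymm
    unfold Matrix.IsSymm
    rw [Matrix.blockDiagonal_transpose]
    congr 1
    ext1 j
    exact hsymm a.1 a.2 j
  · intro x hx
    refine ⟨⟨(x, fun j => F j x), Submodule.subset_span ⟨x, hx, rfl⟩⟩, ?_, rfl⟩
    exact psd_blockDiagonal fun j => hF j x hx
  · rintro l B hB hl _ ⟨⟨w, hw⟩, hpsd, rfl⟩
    have key : ∀ w ∈ V, l w.1 = ∑ j, ∑ a, ∑ b, B j a b * w.2 j a b := by
      intro w hw
      induction hw using Submodule.span_induction with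
      | mem w hw =>
        obtain ⟨x, hx, rfl⟩ := hw
        exact hl x hx
      | zero => simp
      | add x y _ _ hx hy => simp [hx, hy, mul_add, Finset.sum_add_distrib]
      | smul c x _ hx => simp [hx, Finset.mul_sum, mul_left_comm]
    change 0 ≤ l w.1
    rw [key w hw]
    refine Finset.sum_nonneg fun j _ => psd_pair (hB j) ?_
    have h1 : (Matrix.blockDiagonal w.2).PosSemidef := hpsd
    have h2 := h1.submatrix (fun i => (i, j))
    convert h2 using 1
    ext a b
    simp

section basics
variable {n d : ℕ} {h : MvPolynomial (Fin n) ℝ} {e : Fin n → ℝ}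

theorem aeval_hom {A : Type*} [CommRing A] [Algebra ℝ A] (hhom : h.IsHomogeneous d) (c : A)
    (z : Fin n → A) : aeval (fun i => c * z i) h = c ^ d * aeval z h := by
  rw [aeval_def, aeval_def, eval₂_eq', eval₂_eq', Finset.mul_sum]
  refine Finset.sum_congr rfl fun m hm => ?_
  have hd : ∑ i, m i = d := by
    have := hhom (mem_support_iff.1 hm)
    rw [← this, Finsupp.weight_apply, Finsupp.sum_fintype]
    · simp
    · simp
  simp only [mul_pow, Finset.prod_mul_distrib, Finset.prod_pow_eq_pow_sum, hd]
  ring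

theorem eval_hom (hhom : h.IsHomogeneous d) (c : ℝ) (z : Fin n → ℝ) :
    eval (c • z) h = c ^ d * eval z h := by
  have := aeval_hom hhom c z
  rw [← MvPolynomial.coe_aeval_eq_eval, ← MvPolynomial.coe_aeval_eq_eval]
  exact this

theorem linePoly_aeval (a v : Fin n → ℝ) (z : ℂ) :
    Polynomial.aeval z (linePoly h a v) = aeval (fun i => (a i : ℂ) + (v i : ℂ) * z) h := by
  unfold linePoly
  rw [← AlgHom.comp_apply, MvPolynomial.comp_aeval]
  congr 2
  ext i
  simp

theorem linePoly_eval (a v : Fin n → ℝ) (t : ℝ) :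
    Polynomial.eval t (linePoly h a v) = eval (a + t • v) h := by
  unfold linePoly
  rw [← Polynomial.coe_aeval_eq_eval, ← MvPolynomial.coe_aeval_eq_eval]
  change Polynomial.aeval t _ = MvPolynomial.aeval _ _
  rw [← AlgHom.comp_apply, MvPolynomial.comp_aeval]
  congr 2
  ext i
  simp only [map_add, map_mul, Polynomial.aeval_C, Polynomial.aeval_X, Pi.add_apply, Pi.smul_apply,
    smul_eq_mul]
  exact congrArg _ (mul_comm _ _)

theorem aeval_ofReal (x : Fin n → ℝ) :
    aeval (fun i => (x i : ℂ)) h = ((eval x h : ℝ) : ℂ) := by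
  rw [← MvPolynomial.coe_aeval_eq_eval]
  exact MvPolynomial.aeval_algebraMap_apply ℂ x h

theorem continuous_hC : Continuous fun z : Fin n → ℂ => aeval z h := by
  simp only [aeval_def, eval₂_eq']
  fun_prop

theorem continuous_h : Continuous fun z : Fin n → ℝ => eval z h := MvPolynomial.continuous_eval h

theorem mem_hypCone_iff (hhyp : IsHyperbolic h e) {a : Fin n → ℝ} :
    a ∈ hypCone h e ↔ ∀ t : ℝ, 0 < t → eval (a + t • e) h ≠ 0 := by
  have key : ∀ t : ℝ, Polynomial.aeval ((-t : ℝ) : ℂ) (linePoly h a (-e))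
      = ((eval (a + t • e) h : ℝ) : ℂ) := by
    intro t
    rw [linePoly_aeval, ← aeval_ofReal]
    congr 2
    ext i
    simp [mul_comm]
  constructor
  · intro ha t ht h0
    have := (ha ((-t : ℝ) : ℂ) (by rw [key, h0]; simp)).2
    simp at this
    linarith
  · intro ha z hz
    have him := hhyp.2 a z hz
    refine ⟨him, ?_⟩
    by_contra hneg
    push Not at hneg
    have hz' : z = ((-(-z.re) : ℝ) : ℂ) := by
      apply Complex.ext <;> simp [him]
    refine ha (-z.re) (by linarith) ?_
    rw [hz', key] at hz
    exact_mod_cast hz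

/-- Openness of uniform non-vanishing over a compact parameter set. -/
theorem isOpen_forall_ne {X Y Z : Type*} [TopologicalSpace X] [TopologicalSpace Y]
    [TopologicalSpace Z] [T1Space Z] [Zero Z] {K : Set Y} (hK : IsCompact K) {G : X → Y → Z}
    (hG : Continuous fun p : X × Y => G p.1 p.2) : IsOpen {x | ∀ k ∈ K, G x k ≠ 0} := by
  rw [isOpen_iff_mem_nhds]
  intro x hx
  refine hK.eventually_forall_of_forall_eventually fun k hk => ?_
  have : IsOpen {p : X × Y | G p.1 p.2 ≠ 0} := isOpen_compl_singleton.preimage hG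
  exact this.mem_nhds (hx k hk)

/-- Directions of hyperbolicity. -/
def HypDir {n : ℕ} (h : MvPolynomial (Fin n) ℝ) (y : Fin n → ℝ) : Prop :=
  ∀ x : Fin n → ℝ, aeval (fun i => (x i : ℂ) + Complex.I * (y i : ℂ)) h ≠ 0

theorem HypDir.smul (hhom : h.IsHomogeneous d) {y : Fin n → ℝ} (hy : HypDir h y) {c : ℝ}
    (hc : c ≠ 0) : HypDir h (c • y) := by
  intro x h0
  apply hy (c⁻¹ • x)
  have hc' : (c : ℂ) ≠ 0 := by exact_mod_cast hc
  have := aeval_hom (A := ℂ) hhom (c : ℂ)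
    (fun i => ((c⁻¹ • x) i : ℂ) + Complex.I * (y i : ℂ))
  have h2 : (fun i => (c : ℂ) * (((c⁻¹ • x) i : ℂ) + Complex.I * (y i : ℂ))) =
      fun i => (x i : ℂ) + Complex.I * ((c • y) i : ℂ) := by
    ext i
    simp only [Pi.smul_apply, smul_eq_mul, Complex.ofReal_mul, Complex.ofReal_inv]
    field_simp
  rw [h2, h0] at this
  rcases mul_eq_zero.1 this.symm with h3 | h3
  · exact absurd h3 (pow_ne_zero _ hc')
  · exact h3

theorem hypDir_e (hhyp : IsHyperbolic h e) : HypDir h e := by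
  intro x h0
  have := hhyp.2 x (-Complex.I) (by
    rw [linePoly_aeval]
    rw [← h0]
    congr 2
    ext i
    simp
    ring)
  simp at this

theorem HypDir.eval_ne (hhom : h.IsHomogeneous d) {y : Fin n → ℝ} (hy : HypDir h y) :
    eval y h ≠ 0 := by
  intro h0
  apply hy 0
  have := aeval_hom (A := ℂ) hhom Complex.I (fun i => (y i : ℂ))
  rw [aeval_ofReal, h0] at this
  simpa using this

theorem HypDir.realRooted (hhom : h.IsHomogeneous d) {y : Fin n → ℝ} (hy : HypDir h y)
    (w : Fin n → ℝ) : RealRooted (linePoly h y w) := by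
  intro z hz
  rw [linePoly_aeval] at hz
  by_contra him
  have hz0 : z ≠ 0 := by rintro rfl; simp at him
  have hi : (z⁻¹).im ≠ 0 := by
    rw [Complex.inv_im]
    have := Complex.normSq_pos.2 hz0
    exact div_ne_zero (neg_ne_zero.2 him) this.ne'
  apply hy.smul hhom hi (w + (z⁻¹).re • y)
  have h1 := aeval_hom (A := ℂ) hhom z⁻¹ (fun i => (y i : ℂ) + (w i : ℂ) * z)
  rw [hz, mul_zero] at h1
  rw [← h1]
  congr 2
  ext i
  have h2 := Complex.re_add_im (z⁻¹)
  have h3 : z⁻¹ * ((y i : ℂ) + (w i : ℂ) * z) = w i + (y i) * z⁻¹ := by field_simp; ring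
  rw [h3]
  conv_rhs => rw [← h2]
  simp
  ring

/-- For a complex polynomial with all roots in the lower half plane, moving up increases `|p|`. -/
theorem norm_eval_re_le (p : Polynomial ℂ) (hp : ∀ r : ℂ, 0 ≤ r.im → p.eval r ≠ 0) (s : ℂ)
    (hs : 0 ≤ s.im) : ‖p.eval (s.re : ℂ)‖ ≤ ‖p.eval s‖ := by
  have hp0 : p ≠ 0 := by rintro rfl; exact hp 0 (by simp) (by simp)
  have hsp := (IsAlgClosed.splits p).eq_prod_roots
  have hev : ∀ t, p.eval t = p.leadingCoeff * (p.roots.map fun r => t - r).prod := by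
    intro t
    conv_lhs => rw [hsp]
    rw [Polynomial.eval_mul, Polynomial.eval_C, Polynomial.eval_multiset_prod, Multiset.map_map]
    simp
  rw [hev, hev, norm_mul, norm_mul]
  refine mul_le_mul_of_nonneg_left ?_ (norm_nonneg _)
  have hr : ∀ r ∈ p.roots, r.im < 0 := by
    intro r hr
    by_contra hc
    exact hp r (not_lt.1 hc) ((Polynomial.mem_roots hp0).1 hr)
  generalize p.roots = R at hr
  induction R using Multiset.induction_on with
  | empty => simp
  | cons r R ih =>
    simp only [Multiset.map_cons, Multiset.prod_cons, norm_mul]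
    refine mul_le_mul ?_ (ih fun x hx => hr x (Multiset.mem_cons_of_mem hx)) (norm_nonneg _)
      (norm_nonneg _)
    have := hr r (Multiset.mem_cons_self r R)
    rw [Complex.norm_def, Complex.norm_def]
    apply Real.sqrt_le_sqrt
    simp only [Complex.normSq_apply, Complex.sub_re, Complex.sub_im, Complex.ofReal_re,
      Complex.ofReal_im]
    nlinarith

end basics

section garding
variable {n d : ℕ} {h : MvPolynomial (Fin n) ℝ} {e : Fin n → ℝ}

theorem garding_base (hhom : h.IsHomogeneous d) (hhyp : IsHyperbolic h e) {a : Fin n → ℝ}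
    (ha : ∀ t : ℝ, 0 ≤ t → eval (a + t • e) h ≠ 0) (r : ℂ) (hr : 0 ≤ r.im) :
    aeval (fun i => Complex.I * (e i : ℂ) + (a i : ℂ) * r) h ≠ 0 := by
  intro h0
  by_cases hr0 : r = 0
  · subst hr0
    apply hypDir_e hhyp 0
    simpa using h0
  · have h1 := aeval_hom (A := ℂ) hhom r⁻¹ (fun i => Complex.I * (e i : ℂ) + (a i : ℂ) * r)
    rw [h0, mul_zero] at h1
    have h2 : (fun i => r⁻¹ * (Complex.I * (e i : ℂ) + (a i : ℂ) * r)) =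
        fun i => (a i : ℂ) + (((-e) i : ℝ) : ℂ) * (-(Complex.I * r⁻¹)) := by
      ext i
      simp
      field_simp
      ring
    rw [h2, ← linePoly_aeval] at h1
    have him := hhyp.2 a _ h1
    have hre : (r⁻¹).re = 0 := by simpa using him
    have him2 : (r⁻¹).im ≤ 0 := by
      rw [Complex.inv_im]
      exact div_nonpos_of_nonpos_of_nonneg (by linarith) (Complex.normSq_nonneg _)
    have hz : -(Complex.I * r⁻¹) = (((r⁻¹).im : ℝ) : ℂ) := by
      apply Complex.ext
      · simp
      · simpa using hre
    rw [hz, linePoly_aeval] at h1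
    refine ha (-(r⁻¹).im) (by linarith) ?_
    have h3 := aeval_ofReal (h := h) (a + (-(r⁻¹).im) • e)
    rw [← Complex.ofReal_eq_zero, ← h3, ← h1]
    congr 2
    ext i
    simp only [Pi.add_apply, Pi.smul_apply, smul_eq_mul, Pi.neg_apply]
    push_cast
    ring

theorem garding_step (hhom : h.IsHomogeneous d) (hhyp : IsHyperbolic h e) {a y : Fin n → ℝ}
    (hseg : ∀ θ : ℝ, 0 ≤ θ → θ ≤ 1 → HypDir h ((1 - θ) • e + θ • y))
    (ha : ∀ t : ℝ, 0 ≤ t → eval (a + t • e) h ≠ 0) : HypDir h (y + a) := by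
  intro x
  let κ : ℝ → ℝ := fun β => max 0 (min β 1)
  have hκ0 : ∀ β, 0 ≤ κ β := fun β => le_max_left _ _
  have hκ1 : ∀ β, κ β ≤ 1 := fun β => max_le zero_le_one (min_le_right _ _)
  have hκc : Continuous κ := by fun_prop
  let bs : ℝ → Fin n → ℂ := fun k i =>
    (k : ℂ) * x i + Complex.I * (((1 - k) • e + k • y) i : ℝ)
  have hbsc : Continuous bs := by
    refine continuous_pi fun i => ?_
    simp only [bs, Pi.add_apply, Pi.smul_apply, smul_eq_mul]
    fun_prop
  let G : ℝ → ℂ → ℂ := fun β r => aeval (fun i => bs (κ β) i + (a i : ℂ) * r) h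
  have hGc : Continuous fun p : ℝ × ℂ => G p.1 p.2 := by
    refine continuous_hC.comp (continuous_pi fun i => ?_)
    have : Continuous fun p : ℝ × ℂ => bs (κ p.1) i :=
      (continuous_apply i).comp (hbsc.comp (hκc.comp continuous_fst))
    fun_prop
  have hreal : ∀ β (r : ℝ), G β r ≠ 0 := by
    intro β r h0
    apply hseg (κ β) (hκ0 β) (hκ1 β) (κ β • x + r • a)
    rw [← h0]
    simp only [G, bs]
    congr 2
    ext i
    simp
    ring
  obtain ⟨B, hB⟩ : ∃ B, ∀ k ∈ Set.Icc (0 : ℝ) 1, ‖bs k‖ ≤ B :=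
    isCompact_Icc.exists_bound_of_continuousOn hbsc.continuousOn
  have ha0 : aeval (fun i => (a i : ℂ)) h ≠ 0 := by
    rw [aeval_ofReal]
    have := ha 0 le_rfl
    simpa using this
  obtain ⟨δ, hδ, hδa⟩ : ∃ δ > 0, ∀ z : Fin n → ℂ, dist z (fun i => (a i : ℂ)) < δ →
      aeval z h ≠ 0 := by
    have : {z : Fin n → ℂ | aeval z h ≠ 0} ∈ nhds (fun i => (a i : ℂ)) :=
      (isOpen_compl_singleton.preimage continuous_hC).mem_nhds ha0
    obtain ⟨δ, hδ, hs⟩ := Metric.mem_nhds_iff.1 this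
    exact ⟨δ, hδ, fun z hz => hs hz⟩
  have hbound : ∀ β r, G β r = 0 → ‖r‖ ≤ |B| / δ := by
    intro β r h0
    by_contra hc
    push Not at hc
    have hrpos : 0 < ‖r‖ := lt_of_le_of_lt (by positivity) hc
    have hr0 : r ≠ 0 := norm_pos_iff.1 hrpos
    refine hδa (fun i => r⁻¹ * (bs (κ β) i + (a i : ℂ) * r)) ?_ ?_
    · rw [dist_eq_norm]
      have : (fun i => r⁻¹ * (bs (κ β) i + (a i : ℂ) * r)) - (fun i => (a i : ℂ))
          = r⁻¹ • bs (κ β) := by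
        ext i
        simp
        field_simp
        ring
      rw [this, norm_smul, norm_inv]
      have h1 : ‖bs (κ β)‖ ≤ |B| := (hB _ ⟨hκ0 β, hκ1 β⟩).trans (le_abs_self _)
      rw [div_lt_iff₀ hδ] at hc
      rw [inv_mul_lt_iff₀ hrpos]
      linarith
    · rw [aeval_hom hhom]
      simp only [G] at h0
      rw [h0, mul_zero]
  let O : Set ℝ := {β | ∀ r : ℂ, 0 ≤ r.im → G β r ≠ 0}
  have hOo : IsOpen O := by
    have hcpt : IsCompact (Metric.closedBall (0 : ℂ) (|B| / δ) ∩ {r : ℂ | 0 ≤ r.im}) :=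
      (isCompact_closedBall _ _).inter_right (isClosed_le continuous_const Complex.continuous_im)
    have := isOpen_forall_ne hcpt hGc
    convert this using 1
    ext β
    constructor
    · intro hβ r hr
      exact hβ r hr.2
    · intro hβ r hr h0
      exact hβ r ⟨by simpa using hbound β r h0, hr⟩ h0
  have hOcl : IsClosed O := by
    rw [← closure_subset_iff_isClosed]
    intro β hβ r hr
    have hcl : IsClosed {β | ‖G β (r.re : ℂ)‖ ≤ ‖G β r‖} := by
      refine isClosed_le ?_ ?_
      · exact (hGc.comp (continuous_id.prodMk continuous_const)).norm
      · exact (hGc.comp (continuous_id.prodMk continuous_const)).norm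
    have hsub : O ⊆ {β | ‖G β (r.re : ℂ)‖ ≤ ‖G β r‖} := by
      intro β hβ
      let Q : Polynomial ℂ :=
        aeval (fun i => Polynomial.C (bs (κ β) i) + Polynomial.C (a i : ℂ) * Polynomial.X) h
      have hQ : ∀ r, Q.eval r = G β r := by
        intro r
        change Polynomial.aeval r Q = _
        have : Polynomial.aeval r Q = ((Polynomial.aeval r).restrictScalars ℝ) Q := rfl
        rw [this]
        simp only [Q, G]
        rw [← AlgHom.comp_apply, MvPolynomial.comp_aeval]
        congr 2
        ext i
        simp
      have := norm_eval_re_le Q (fun r hr => by rw [hQ]; exact hβ r hr) r hr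
      rwa [hQ, hQ] at this
    have h1 : ‖G β (r.re : ℂ)‖ ≤ ‖G β r‖ := closure_minimal hsub hcl hβ
    intro h0
    rw [h0, norm_zero] at h1
    exact hreal β r.re (norm_le_zero_iff.1 h1)
  have h0 : (0 : ℝ) ∈ O := by
    intro r hr h0
    apply garding_base hhom hhyp ha r hr
    rw [← h0]
    simp [G, bs, κ]
  have huniv : O = Set.univ := IsClopen.eq_univ ⟨hOcl, hOo⟩ ⟨0, h0⟩
  have h1 : (1 : ℝ) ∈ O := huniv ▸ Set.mem_univ _
  have h2 := h1 Complex.I (by simp)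
  intro h3
  apply h2
  rw [← h3]
  simp only [G, bs, κ]
  congr 2
  ext i
  simp
  ring

/-- Points strictly inside the cone, iterated. -/
theorem garding_seg (hhom : h.IsHomogeneous d) (hhyp : IsHyperbolic h e) {a y : Fin n → ℝ}
    (hseg : ∀ θ : ℝ, 0 ≤ θ → θ ≤ 1 → HypDir h ((1 - θ) • e + θ • y))
    (ha : ∀ t : ℝ, 0 ≤ t → eval (a + t • e) h ≠ 0) :
    ∀ θ : ℝ, 0 ≤ θ → θ ≤ 1 → HypDir h ((1 - θ) • e + θ • (y + a)) := by
  intro θ h0 h1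
  rcases h0.eq_or_lt with rfl | hpos
  · simpa using hypDir_e hhyp
  have h2 : HypDir h (((1 - θ) • e + θ • y) + θ • a) := by
    refine garding_step hhom hhyp (fun φ hφ0 hφ1 => ?_) (fun t ht => ?_)
    · have := hseg (φ * θ) (by positivity) (by nlinarith)
      convert this using 1
      module
    · have h3 := ha (t / θ) (by positivity)
      have h4 : θ • a + t • e = θ • (a + (t / θ) • e) := by
        rw [smul_add, smul_smul]
        congr 2
        field_simp
      rw [h4, eval_hom hhom]
      exact mul_ne_zero (pow_ne_zero _ hpos.ne') h3
  convert h2 using 1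
  module

theorem cone_shift (hhyp : IsHyperbolic h e) {a : Fin n → ℝ} (ha : a ∈ hypCone h e) {ε : ℝ}
    (hε : 0 < ε) : ∀ t : ℝ, 0 ≤ t → eval ((a + ε • e) + t • e) h ≠ 0 := by
  intro t ht
  have := (mem_hypCone_iff hhyp).1 ha (ε + t) (by linarith)
  rwa [add_smul, ← add_assoc] at this

theorem cone_smul (hhom : h.IsHomogeneous d) (hhyp : IsHyperbolic h e) {a : Fin n → ℝ}
    (ha : a ∈ hypCone h e) {c : ℝ} (hc : 0 < c) : c • a ∈ hypCone h e := by
  rw [mem_hypCone_iff hhyp] at *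
  intro t ht
  have h4 : c • a + t • e = c • (a + (t / c) • e) := by
    rw [smul_add, smul_smul]
    congr 2
    field_simp
  rw [h4, eval_hom hhom]
  exact mul_ne_zero (pow_ne_zero _ hc.ne') (ha _ (by positivity))

theorem cone_hypDir2 (hhom : h.IsHomogeneous d) (hhyp : IsHyperbolic h e) {a b : Fin n → ℝ}
    (ha : a ∈ hypCone h e) (hb : b ∈ hypCone h e) {ε : ℝ} (hε : 0 < ε) :
    HypDir h (a + b + ε • e) := by
  have h1 := garding_seg hhom hhyp (y := e) (a := (3 / ε) • a + (1 : ℝ) • e) (fun θ _ _ => by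
      have : (1 - θ) • e + θ • e = e := by module
      rw [this]; exact hypDir_e hhyp)
      (cone_shift hhyp (cone_smul hhom hhyp ha (by positivity)) one_pos)
  have h2 := garding_seg hhom hhyp h1 (a := (3 / ε) • b + (1 : ℝ) • e)
      (cone_shift hhyp (cone_smul hhom hhyp hb (by positivity)) one_pos)
  have h3 := (h2 1 zero_le_one le_rfl).smul hhom (c := ε / 3) (by positivity)
  convert h3 using 1
  have hcc : (ε / 3) * (3 / ε) = 1 := by field_simp
  have : (ε / 3) • ((1 - (1 : ℝ)) • e + (1 : ℝ) • (e + ((3 / ε) • a + (1 : ℝ) • e) +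
      ((3 / ε) • b + (1 : ℝ) • e))) = ((ε / 3) * (3 / ε)) • a + ((ε / 3) * (3 / ε)) • b + ε • e := by
    module
  rw [this, hcc]
  simp

theorem cone_zero (hhom : h.IsHomogeneous d) (hhyp : IsHyperbolic h e) :
    (0 : Fin n → ℝ) ∈ hypCone h e := by
  rw [mem_hypCone_iff hhyp]
  intro t ht
  rw [zero_add, eval_hom hhom]
  exact mul_ne_zero (pow_ne_zero _ ht.ne') hhyp.1

theorem cone_hypDir (hhom : h.IsHomogeneous d) (hhyp : IsHyperbolic h e) {a : Fin n → ℝ}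
    (ha : a ∈ hypCone h e) {ε : ℝ} (hε : 0 < ε) :
    HypDir h (a + ε • e) := by
  have := cone_hypDir2 hhom hhyp ha (cone_zero hhom hhyp) hε
  simpa using this

theorem cone_add (hhom : h.IsHomogeneous d) (hhyp : IsHyperbolic h e) {a b : Fin n → ℝ}
    (ha : a ∈ hypCone h e) (hb : b ∈ hypCone h e) : a + b ∈ hypCone h e := by
  rw [mem_hypCone_iff hhyp]
  intro t ht
  exact (cone_hypDir2 hhom hhyp ha hb ht).eval_ne hhom

/-- Nonvanishing for large times is an open condition. -/
theorem isOpen_late (hhom : h.IsHomogeneous d) (e : Fin n → ℝ) {τ : ℝ} (hτ : 0 < τ)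
    (he : eval e h ≠ 0) : IsOpen {x : Fin n → ℝ | ∀ t : ℝ, τ ≤ t → eval (x + t • e) h ≠ 0} := by
  have h1 : IsOpen {x : Fin n → ℝ | ∀ s ∈ Set.Icc (0 : ℝ) τ⁻¹, eval (s • x + e) h ≠ 0} := by
    refine isOpen_forall_ne (G := fun (x : Fin n → ℝ) (s : ℝ) => eval (s • x + e) h)
      isCompact_Icc ?_
    exact continuous_h.comp (by fun_prop)
  convert h1 using 1
  ext x
  have key : ∀ t : ℝ, 0 < t → eval (x + t • e) h = t ^ d * eval (t⁻¹ • x + e) h := by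
    intro t ht
    rw [← eval_hom hhom, smul_add, smul_smul, mul_inv_cancel₀ ht.ne', one_smul]
  constructor
  · intro hx s hs
    rcases hs.1.eq_or_lt with rfl | hpos
    · simpa using he
    have h2 := hx s⁻¹ ((le_inv_comm₀ hτ hpos).2 hs.2)
    rw [key _ (inv_pos.2 hpos), inv_inv] at h2
    exact right_ne_zero_of_mul h2
  · intro hx t ht
    have htp := lt_of_lt_of_le hτ ht
    rw [key t htp]
    exact mul_ne_zero (pow_ne_zero _ htp.ne')
      (hx _ ⟨(inv_pos.2 htp).le, inv_anti₀ hτ ht⟩)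

theorem cone_interior (hhom : h.IsHomogeneous d) (hhyp : IsHyperbolic h e) {a : Fin n → ℝ}
    (ha : a ∈ hypCone h e) (h0 : eval a h ≠ 0) : hypCone h e ∈ nhds a := by
  have hG : Continuous fun p : (Fin n → ℝ) × ℝ => eval (p.1 + p.2 • e) h :=
    continuous_h.comp (by fun_prop)
  have h1 : IsOpen {x : Fin n → ℝ | ∀ s ∈ Set.Icc (0 : ℝ) 1, eval (x + s • e) h ≠ 0} :=
    isOpen_forall_ne (G := fun (x : Fin n → ℝ) (s : ℝ) => eval (x + s • e) h) isCompact_Icc hG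
  have h2 := isOpen_late hhom e one_pos hhyp.1
  have h3 := (h1.inter h2).mem_nhds (x := a) ⟨fun s hs => ?_, fun t ht => ?_⟩
  · filter_upwards [h3] with x hx
    rw [mem_hypCone_iff hhyp]
    intro t ht
    rcases le_total t 1 with h4 | h4
    · exact hx.1 t ⟨ht.le, h4⟩
    · exact hx.2 t h4
  · rcases hs.1.eq_or_lt with rfl | hpos
    · simpa using h0
    · exact (mem_hypCone_iff hhyp).1 ha s hpos
  · exact (mem_hypCone_iff hhyp).1 ha t (by linarith)

theorem cone_e (hhom : h.IsHomogeneous d) (hhyp : IsHyperbolic h e) : e ∈ hypCone h e := by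
  rw [mem_hypCone_iff hhyp]
  intro t ht
  have : e + t • e = (1 + t) • e := by module
  rw [this, eval_hom hhom]
  exact mul_ne_zero (pow_ne_zero _ (by positivity)) hhyp.1

theorem cone_closed (hhom : h.IsHomogeneous d) (hhyp : IsHyperbolic h e) :
    IsClosed (hypCone h e) := by
  rw [← closure_subset_iff_isClosed]
  intro a ha
  rw [mem_hypCone_iff hhyp]
  intro t ht
  have he := cone_interior hhom hhyp (cone_e hhom hhyp) hhyp.1
  have hc : Filter.Tendsto (fun x => e + (2 / t) • (a - x)) (nhds a) (nhds e) := by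
    have : Continuous fun x => e + (2 / t) • (a - x) := by fun_prop
    have h2 := this.tendsto a
    simpa using h2
  have h1 : ∀ᶠ x in nhds a, e + (2 / t) • (a - x) ∈ hypCone h e := hc.eventually he
  obtain ⟨b, hb2, hb1⟩ := ((mem_closure_iff_frequently.1 ha).and_eventually h1).exists
  have h3 : b + (t / 2) • (e + (2 / t) • (a - b)) ∈ hypCone h e :=
    cone_add hhom hhyp hb2 (cone_smul hhom hhyp hb1 (by positivity))
  have h4 := (mem_hypCone_iff hhyp).1 h3 (t / 2) (by positivity)
  have hcc : (t / 2) * (2 / t) = 1 := by field_simp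
  have hab : b + (1 : ℝ) • (a - b) + t • e = a + t • e := by module
  have : b + (t / 2) • (e + (2 / t) • (a - b)) + (t / 2) • e =
    b + ((t / 2) * (2 / t)) • (a - b) + t • e := by module
  rw [hcc, hab] at this
  rw [this] at h4
  exact h4

theorem cone_frontier (hhyp : IsHyperbolic h e) {a : Fin n → ℝ}
    (ha : a ∈ hypCone h e) (h0 : eval a h = 0) : a ∈ frontier (hypCone h e) := by
  refine ⟨subset_closure ha, fun hi => ?_⟩
  have hc : Filter.Tendsto (fun s : ℝ => a - s • e) (nhds 0) (nhds a) := by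
    have : Continuous fun s : ℝ => a - s • e := by fun_prop
    have h2 := this.tendsto 0
    simpa using h2
  have h1 := hc (mem_interior_iff_mem_nhds.1 hi)
  obtain ⟨ε, hε, hs⟩ := Metric.mem_nhds_iff.1 h1
  have h2 : a - (ε / 2) • e ∈ hypCone h e := hs (by simp [abs_of_pos hε]; linarith)
  refine (mem_hypCone_iff hhyp).1 h2 (ε / 2) (by positivity) ?_
  simpa using h0

/-- Positivity on the cone. -/
theorem cone_pos (hhom : h.IsHomogeneous d) (hhyp : IsHyperbolic h e) (hpos : 0 < eval e h)
    {a : Fin n → ℝ} (ha : a ∈ hypCone h e) {t : ℝ} (ht : 0 < t) : 0 < eval (a + t • e) h := by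
  have key : ∀ s : ℝ, 0 ≤ s → eval (s • (a + t • e) + e) h ≠ 0 := by
    intro s hs
    have h1 := cone_shift hhyp ha ht
    rcases hs.eq_or_lt with rfl | hs'
    · simpa using hhyp.1
    · have h2 := h1 s⁻¹ (by positivity)
      have : s • (a + t • e) + e = s • (a + t • e + s⁻¹ • e) := by
        rw [smul_add s (a + t • e), smul_smul, mul_inv_cancel₀ hs'.ne', one_smul]
      rw [this, eval_hom hhom]
      exact mul_ne_zero (pow_ne_zero _ hs'.ne') h2
  have hcont : Continuous fun θ : ℝ => eval (θ • (a + t • e) + (1 - θ) • e) h :=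
    continuous_h.comp (by fun_prop)
  have hne : ∀ θ ∈ Set.Icc (0 : ℝ) 1, eval (θ • (a + t • e) + (1 - θ) • e) h ≠ 0 := by
    intro θ hθ
    rcases hθ.2.eq_or_lt with rfl | h1
    · have := (mem_hypCone_iff hhyp).1 ha t ht
      simpa using this
    · have h1' : 0 < 1 - θ := by linarith
      have : θ • (a + t • e) + (1 - θ) • e = (1 - θ) • ((θ / (1 - θ)) • (a + t • e) + e) := by
        rw [smul_add (1 - θ), smul_smul]
        congr 2
        field_simp
      rw [this, eval_hom hhom]
      exact mul_ne_zero (pow_ne_zero _ h1'.ne') (key _ (div_nonneg hθ.1 h1'.le))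
  by_contra hc
  push Not at hc
  have hivt := intermediate_value_Icc' (a := (0 : ℝ)) (b := 1) zero_le_one hcont.continuousOn
  obtain ⟨θ, hθ, h0⟩ := hivt (show (0 : ℝ) ∈ Set.Icc _ _ by
    constructor
    · simpa using hc
    · simpa using hpos.le)
  exact hne θ hθ h0

theorem cone_nonneg (hhom : h.IsHomogeneous d) (hhyp : IsHyperbolic h e) (hpos : 0 < eval e h)
    {a : Fin n → ℝ} (ha : a ∈ hypCone h e) : 0 ≤ eval a h := by
  have hc : Filter.Tendsto (fun s : ℝ => eval (a + s • e) h) (nhdsWithin 0 (Set.Ioi 0))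
      (nhds (eval a h)) := by
    have : Continuous fun s : ℝ => eval (a + s • e) h := continuous_h.comp (by fun_prop)
    have h2 := this.tendsto 0
    simp only [zero_smul, add_zero] at h2
    exact h2.mono_left nhdsWithin_le_nhds
  refine ge_of_tendsto hc ?_
  filter_upwards [self_mem_nhdsWithin] with s hs
  exact (cone_pos hhom hhyp hpos ha hs).le

end garding

section taylor
variable {n d : ℕ} {h : MvPolynomial (Fin n) ℝ} {e : Fin n → ℝ}

/-- First order coefficient along a line. -/
noncomputable def D1 {n : ℕ} (h : MvPolynomial (Fin n) ℝ) (u ξ : Fin n → ℝ) : ℝ :=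
  (linePoly h u ξ).coeff 1

/-- Second order coefficient along a line. -/
noncomputable def D2 {n : ℕ} (h : MvPolynomial (Fin n) ℝ) (u ξ : Fin n → ℝ) : ℝ :=
  (linePoly h u ξ).coeff 2

/-- Quadratic form of a matrix. -/
def quad {n : ℕ} (B : Matrix (Fin n) (Fin n) ℝ) (ξ : Fin n → ℝ) : ℝ :=
  ∑ a, ∑ b, B a b * (ξ a * ξ b)

theorem linePoly_coeff_zero (u ξ : Fin n → ℝ) : (linePoly h u ξ).coeff 0 = eval u h := by
  rw [Polynomial.coeff_zero_eq_eval_zero, linePoly_eval]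
  simp

theorem linePoly_add (p q : MvPolynomial (Fin n) ℝ) (u ξ : Fin n → ℝ) :
    linePoly (p + q) u ξ = linePoly p u ξ + linePoly q u ξ := by simp [linePoly]

theorem linePoly_mul (p q : MvPolynomial (Fin n) ℝ) (u ξ : Fin n → ℝ) :
    linePoly (p * q) u ξ = linePoly p u ξ * linePoly q u ξ := by simp [linePoly]

theorem linePoly_C (r : ℝ) (u ξ : Fin n → ℝ) :
    linePoly (C r : MvPolynomial (Fin n) ℝ) u ξ = Polynomial.C r := by
  simp [linePoly]

theorem linePoly_X (i : Fin n) (u ξ : Fin n → ℝ) :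
    linePoly (X i : MvPolynomial (Fin n) ℝ) u ξ
      = Polynomial.C (u i) + Polynomial.C (ξ i) * Polynomial.X := by
  simp [linePoly]

theorem coeff_two_mul (p q : Polynomial ℝ) : (p * q).coeff 2 =
    p.coeff 0 * q.coeff 2 + p.coeff 1 * q.coeff 1 + p.coeff 2 * q.coeff 0 := by
  rw [Polynomial.coeff_mul, Finset.Nat.sum_antidiagonal_eq_sum_range_succ_mk]
  simp [Finset.sum_range_succ]

theorem taylor (q : MvPolynomial (Fin n) ℝ) :
    ∃ (ι : Type) (_ : Fintype ι) (m : ι → (Fin n → ℝ) → ℝ)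
      (c : ι → (Fin n → ℝ) → Matrix (Fin n) (Fin n) ℝ) (g : (Fin n → ℝ) → (Fin n → ℝ)),
      (∀ k, Continuous (m k)) ∧ (∀ k, Continuous (c k)) ∧ Continuous g ∧
      (∀ u ξ, D1 q u ξ = ∑ i, g u i * ξ i) ∧
      (∀ u ξ, D2 q u ξ = ∑ k, m k u * quad (c k u) ξ) ∧
      (∀ u x, eval x q = eval u q + D1 q u (x - u) + ∑ k, m k x * quad (c k u) (x - u)) := by
  induction q using MvPolynomial.induction_on with
  | C r =>
    refine ⟨Empty, inferInstance, fun _ _ => 0, fun _ _ => 0, fun _ => 0, ?_, ?_, ?_, ?_, ?_, ?_⟩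
    · intro k; exact k.elim
    · intro k; exact k.elim
    · exact continuous_const
    · intro u ξ; simp [D1, linePoly_C, Polynomial.coeff_C]
    · intro u ξ; simp [D2, linePoly_C, Polynomial.coeff_C]
    · intro u ξ; simp [D1, linePoly_C, Polynomial.coeff_C]
  | add p q hp hq =>
    obtain ⟨ι, _, m, c, g, hm, hc, hg, h1, h2, h3⟩ := hp
    obtain ⟨ι', _, m', c', g', hm', hc', hg', h1', h2', h3'⟩ := hq
    have hD1 : ∀ u ξ, D1 (p + q) u ξ = D1 p u ξ + D1 q u ξ := by
      intro u ξ; simp [D1, linePoly_add]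
    have hD2 : ∀ u ξ, D2 (p + q) u ξ = D2 p u ξ + D2 q u ξ := by
      intro u ξ; simp [D2, linePoly_add]
    refine ⟨ι ⊕ ι', inferInstance, Sum.elim m m', Sum.elim c c', fun u => g u + g' u,
      ?_, ?_, ?_, ?_, ?_, ?_⟩
    · rintro (k | k); exacts [hm k, hm' k]
    · rintro (k | k); exacts [hc k, hc' k]
    · exact hg.add hg'
    · intro u ξ; rw [hD1, h1, h1']; simp [add_mul, Finset.sum_add_distrib]
    · intro u ξ; rw [hD2, h2, h2']; simp
    · intro u x
      rw [hD1, map_add, map_add, h3 u x, h3' u x]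
      simp
      ring
  | mul_X p j hp =>
    obtain ⟨ι, _, m, c, g, hm, hc, hg, h1, h2, h3⟩ := hp
    have hD1 : ∀ u ξ, D1 (p * X j) u ξ = u j * D1 p u ξ + ξ j * eval u p := by
      intro u ξ
      simp only [D1, linePoly_mul, linePoly_X, Polynomial.mul_coeff_one, linePoly_coeff_zero]
      simp
      ring
    have hD2 : ∀ u ξ, D2 (p * X j) u ξ = u j * D2 p u ξ + ξ j * D1 p u ξ := by
      intro u ξ
      simp only [D1, D2, linePoly_mul, linePoly_X, coeff_two_mul, linePoly_coeff_zero]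
      simp [Polynomial.coeff_C, Polynomial.coeff_X]
      ring
    have hq : ∀ u ξ, quad (fun a b => if a = j then g u b else 0) ξ = ξ j * D1 p u ξ := by
      intro u ξ
      rw [h1]
      unfold quad
      rw [Finset.sum_eq_single j]
      · simp only [if_true, Finset.mul_sum]
        exact Finset.sum_congr rfl fun b _ => by ring
      · intro a _ ha
        simp [ha]
      · simp
    refine ⟨Option ι, inferInstance, fun k x => k.elim 1 (fun k => x j * m k x),
      fun k u => k.elim (fun a b => if a = j then g u b else 0) (fun k => c k u),
      fun u i => u j * g u i + (if i = j then eval u p else 0), ?_, ?_, ?_, ?_, ?_, ?_⟩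
    · rintro (_ | k)
      · exact continuous_const
      · exact (continuous_apply j).mul (hm k)
    · rintro (_ | k)
      · refine continuous_pi fun a => continuous_pi fun b => ?_
        by_cases ha : a = j
        · simp only [Option.elim, ha, if_true]
          exact (continuous_apply b).comp hg
        · simp only [Option.elim, ha, if_false]
          exact continuous_const
      · exact hc k
    · refine continuous_pi fun i => ?_
      have hgi : Continuous fun u => g u i := (continuous_apply i).comp hg
      by_cases hi : i = j
      · simp only [hi, if_true] at *
        exact ((continuous_apply j).mul hgi).add continuous_h
      · simp only [hi, if_false, add_zero]
        exact (continuous_apply j).mul hgi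
    · intro u ξ
      rw [hD1, h1]
      simp [add_mul, Finset.sum_add_distrib, Finset.mul_sum, mul_assoc]
      ring
    · intro u ξ
      rw [hD2, h2]
      simp only [Fintype.sum_option, Option.elim, hq, one_mul, mul_assoc, ← Finset.mul_sum]
      ring
    · intro u x
      rw [hD1]
      simp only [Fintype.sum_option, Option.elim, hq, one_mul, mul_assoc, ← Finset.mul_sum,
        map_mul, eval_X, Pi.sub_apply]
      have := h3 u x
      generalize D1 p u (x - u) = A at *
      generalize (∑ i, m i x * quad (c i u) (x - u)) = Z at *
      rw [this]
      ring

theorem D1_add (u ξ η : Fin n → ℝ) : D1 h u (ξ + η) = D1 h u ξ + D1 h u η := by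
  obtain ⟨ι, _, m, c, g, hm, hc, hg, h1, h2, h3⟩ := taylor h
  simp [h1, mul_add, Finset.sum_add_distrib]

theorem D1_smul (u ξ : Fin n → ℝ) (r : ℝ) : D1 h u (r • ξ) = r * D1 h u ξ := by
  obtain ⟨ι, _, m, c, g, hm, hc, hg, h1, h2, h3⟩ := taylor h
  simp [h1, Finset.mul_sum, mul_left_comm]

theorem D1_continuous : Continuous fun p : (Fin n → ℝ) × (Fin n → ℝ) => D1 h p.1 p.2 := by
  obtain ⟨ι, _, m, c, g, hm, hc, hg, h1, h2, h3⟩ := taylor h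
  simp only [h1]
  refine continuous_finsetSum _ fun i _ => ?_
  exact ((continuous_apply i).comp (hg.comp continuous_fst)).mul
    ((continuous_apply i).comp continuous_snd)

theorem quad_continuous {X : Type*} [TopologicalSpace X] {c : X → Matrix (Fin n) (Fin n) ℝ}
    {ξ : X → Fin n → ℝ} (hc : Continuous c) (hξ : Continuous ξ) :
    Continuous fun p => quad (c p) (ξ p) := by
  unfold quad
  refine continuous_finsetSum _ fun a _ => continuous_finsetSum _ fun b _ => ?_
  have h1 : Continuous fun p => c p a b := (continuous_apply_apply a b).comp hc
  have h2 : ∀ a, Continuous fun p => ξ p a := fun a => (continuous_apply a).comp hξ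
  exact h1.mul ((h2 a).mul (h2 b))

theorem quad_smul (B : Matrix (Fin n) (Fin n) ℝ) (ξ : Fin n → ℝ) (r : ℝ) :
    quad B (r • ξ) = r ^ 2 * quad B ξ := by
  unfold quad
  simp only [Finset.mul_sum, Pi.smul_apply, smul_eq_mul]
  exact Finset.sum_congr rfl fun a _ => Finset.sum_congr rfl fun b _ => by ring

theorem D2_smul (u ξ : Fin n → ℝ) (r : ℝ) : D2 h u (r • ξ) = r ^ 2 * D2 h u ξ := by
  obtain ⟨ι, _, m, c, g, hm, hc, hg, h1, h2, h3⟩ := taylor h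
  simp only [h2, quad_smul, Finset.mul_sum]
  exact Finset.sum_congr rfl fun a _ => by ring

theorem D2_continuous (u : Fin n → ℝ) : Continuous fun ξ => D2 h u ξ := by
  obtain ⟨ι, _, m, c, g, hm, hc, hg, h1, h2, h3⟩ := taylor h
  simp only [h2]
  exact continuous_finsetSum _ fun i _ =>
    continuous_const.mul (quad_continuous continuous_const continuous_id)

theorem D1_self (hhom : h.IsHomogeneous d) {u : Fin n → ℝ} (hu : eval u h = 0) : D1 h u u = 0 := by
  have h1 : linePoly h u u = 0 := by
    apply Polynomial.funext
    intro t
    rw [linePoly_eval]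
    have : u + t • u = (1 + t) • u := by module
    rw [this, eval_hom hhom, hu]
    simp
  simp [D1, h1]

theorem coeff_one_nonneg {p : Polynomial ℝ} (h0 : p.eval 0 = 0) (hp : ∀ t, 0 < t → 0 ≤ p.eval t) :
    0 ≤ p.coeff 1 := by
  have h1 : p.divX * Polynomial.X = p := by
    conv_rhs => rw [← Polynomial.divX_mul_X_add p]
    rw [Polynomial.coeff_zero_eq_eval_zero, h0]
    simp
  have h2 : p.coeff 1 = p.divX.eval 0 := by
    rw [← Polynomial.coeff_zero_eq_eval_zero, Polynomial.coeff_divX]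
  rw [h2]
  have hc : Filter.Tendsto (fun t => p.divX.eval t) (nhdsWithin 0 (Set.Ioi 0))
      (nhds (p.divX.eval 0)) := (p.divX.continuous.tendsto 0).mono_left nhdsWithin_le_nhds
  refine ge_of_tendsto hc ?_
  filter_upwards [self_mem_nhdsWithin] with t ht
  have h3 := hp t ht
  rw [← h1, Polynomial.eval_mul, Polynomial.eval_X] at h3
  exact nonneg_of_mul_nonneg_left h3 ht

theorem smooth_pos (hhom : h.IsHomogeneous d) (hhyp : IsHyperbolic h e) (hpos : 0 < eval e h)
    {a : Fin n → ℝ} (ha : a ∈ hypCone h e) (h0 : eval a h = 0) (hw : ∃ w, D1 h a w ≠ 0) :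
    0 < D1 h a e := by
  have key : ∀ w ∈ hypCone h e, 0 ≤ D1 h a w := by
    intro w hw
    refine coeff_one_nonneg (by rw [linePoly_eval]; simpa using h0) (fun t ht => ?_)
    rw [linePoly_eval]
    exact cone_nonneg hhom hhyp hpos (cone_add hhom hhyp ha (cone_smul hhom hhyp hw ht))
  refine lt_of_le_of_ne (key e (cone_e hhom hhyp)) fun h1 => ?_
  obtain ⟨w, hw⟩ := hw
  have he := cone_interior hhom hhyp (cone_e hhom hhyp) hhyp.1
  have hc : Filter.Tendsto (fun s : ℝ => e + s • w) (nhds 0) (nhds e) := by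
    have : Continuous fun s : ℝ => e + s • w := by fun_prop
    have h2 := this.tendsto 0
    simpa using h2
  obtain ⟨ε, hε, hs⟩ := Metric.mem_nhds_iff.1 (hc he)
  have hA : e + (ε / 2) • w ∈ hypCone h e := hs (by simp [abs_of_pos hε]; linarith)
  have hB : e + (-(ε / 2)) • w ∈ hypCone h e := hs (by simp [abs_of_pos hε]; linarith)
  have hA' := key _ hA
  have hB' := key _ hB
  rw [D1_add, D1_smul, ← h1, zero_add] at hA' hB'
  have : D1 h a w = 0 := by
    apply le_antisymm
    · nlinarith
    · nlinarith
  exact hw this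

end taylor

section roots
variable {n d : ℕ} {h : MvPolynomial (Fin n) ℝ} {e : Fin n → ℝ}

theorem root_repr (N : ℕ) : ∀ p : Polynomial ℝ, p.natDegree ≤ N → RealRooted p → p.coeff 0 ≠ 0 →
    ∃ T : Multiset ℝ, p = Polynomial.C (p.coeff 0) *
      (T.map (fun t => 1 - Polynomial.C t * Polynomial.X)).prod := by
  induction N with
  | zero =>
    intro p hN _ _
    refine ⟨0, ?_⟩
    simpa using Polynomial.eq_C_of_natDegree_le_zero hN
  | succ N ih =>
    intro p hN hr h0
    by_cases hd : p.natDegree = 0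
    · refine ⟨0, ?_⟩
      simpa using Polynomial.eq_C_of_natDegree_le_zero hd.le
    have hdeg : p.degree ≠ 0 := by
      intro hh
      exact hd (Polynomial.natDegree_eq_of_degree_eq_some hh)
    obtain ⟨z, hz⟩ := IsAlgClosed.exists_aeval_eq_zero ℂ p hdeg
    have hzr : z = ((z.re : ℝ) : ℂ) := by
      apply Complex.ext
      · simp
      · simpa using hr z hz
    set r := z.re with hrdef
    rw [hzr] at hz
    have hroot : p.eval r = 0 := by
      have h1 : Polynomial.aeval ((r : ℝ) : ℂ) p = ((p.eval r : ℝ) : ℂ) := by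
        have := Polynomial.aeval_algebraMap_apply ℂ r p
        rw [Polynomial.coe_aeval_eq_eval] at this
        exact this
      rw [h1] at hz
      exact_mod_cast hz
    obtain ⟨q, hq⟩ := Polynomial.dvd_iff_isRoot.2 hroot
    have hr0 : r ≠ 0 := by
      rintro hr0
      rw [hr0, ← Polynomial.coeff_zero_eq_eval_zero] at hroot
      exact h0 hroot
    have hp0 : p.coeff 0 = - r * q.coeff 0 := by
      rw [hq, Polynomial.mul_coeff_zero]; simp
    have hq0 : q.coeff 0 ≠ 0 := by
      intro hh
      rw [hh, mul_zero] at hp0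
      exact h0 hp0
    have hqne : q ≠ 0 := by rintro rfl; simp at hq0
    have hqdeg : q.natDegree ≤ N := by
      rw [hq, Polynomial.natDegree_mul (Polynomial.X_sub_C_ne_zero r) hqne,
        Polynomial.natDegree_X_sub_C] at hN
      omega
    obtain ⟨T, hT⟩ := ih q hqdeg (fun w hw => hr w (by rw [hq, map_mul, hw, mul_zero])) hq0
    refine ⟨r⁻¹ ::ₘ T, ?_⟩
    have h2 : (Polynomial.X - Polynomial.C r : Polynomial ℝ)
        = Polynomial.C (-r) * (1 - Polynomial.C r⁻¹ * Polynomial.X) := by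
      rw [mul_sub, ← mul_assoc, ← Polynomial.C_mul]
      have : -r * r⁻¹ = -1 := by field_simp
      rw [this]
      simp
      ring
    rw [Multiset.map_cons, Multiset.prod_cons, hp0]
    conv_lhs => rw [hq, hT, h2]
    rw [Polynomial.C_mul]
    ring

theorem prod_coeffs (T : Multiset ℝ) :
    let P := (T.map (fun t => 1 - Polynomial.C t * Polynomial.X)).prod
    P.coeff 0 = 1 ∧ P.coeff 1 = - T.sum ∧
      P.coeff 1 ^ 2 - 2 * P.coeff 2 = (T.map (fun t => t ^ 2)).sum := by
  induction T using Multiset.induction with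
  | empty => simp [Polynomial.coeff_one]
  | cons t T ih =>
    obtain ⟨h0, h1, h2⟩ := ih
    simp only [Multiset.map_cons, Multiset.prod_cons, Multiset.sum_cons]
    set P := (T.map (fun t => 1 - Polynomial.C t * Polynomial.X)).prod
    have e0 : (1 - Polynomial.C t * Polynomial.X : Polynomial ℝ).coeff 0 = 1 := by simp
    have e1 : (1 - Polynomial.C t * Polynomial.X : Polynomial ℝ).coeff 1 = -t := by
      simp [Polynomial.coeff_one]
    have e2 : (1 - Polynomial.C t * Polynomial.X : Polynomial ℝ).coeff 2 = 0 := by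
      simp [Polynomial.coeff_one, Polynomial.coeff_X]
    refine ⟨?_, ?_, ?_⟩
    · rw [Polynomial.mul_coeff_zero, e0, h0]; ring
    · rw [Polynomial.mul_coeff_one, e0, e1, h0, h1]; ring
    · rw [Polynomial.mul_coeff_one, coeff_two_mul, e0, e1, e2, h0, ← h2]; ring

theorem prod_bound (T : Multiset ℝ) (s : ℝ) :
    ((T.map (fun t => 1 - Polynomial.C t * Polynomial.X)).prod).eval s ^ 2
      ≤ Real.exp (2 * s * (- T.sum) + s ^ 2 * (T.map (fun t => t ^ 2)).sum) := by
  induction T using Multiset.induction with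
  | empty => simp
  | cons t T ih =>
    simp only [Multiset.map_cons, Multiset.prod_cons, Multiset.sum_cons, Polynomial.eval_mul]
    have h1 : (1 - t * s) ^ 2 ≤ Real.exp (- 2 * (t * s) + (t * s) ^ 2) := by
      have := Real.add_one_le_exp (- 2 * (t * s) + (t * s) ^ 2)
      linarith [this, sq_nonneg (1 - t * s)]
    rw [mul_pow]
    have h2 := mul_le_mul h1 ih (sq_nonneg _) (Real.exp_nonneg _)
    rw [← Real.exp_add] at h2
    refine le_trans (le_of_eq ?_) (h2.trans (le_of_eq ?_))
    · simp
    · congr 1; ring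

theorem prod_ne (T : Multiset ℝ) (s : ℝ) (hs : s ^ 2 * (T.map (fun t => t ^ 2)).sum < 1) :
    ((T.map (fun t => 1 - Polynomial.C t * Polynomial.X)).prod).eval s ≠ 0 := by
  induction T using Multiset.induction with
  | empty => simp
  | cons t T ih =>
    simp only [Multiset.map_cons, Multiset.prod_cons, Multiset.sum_cons, Polynomial.eval_mul] at *
    have hnn : 0 ≤ (T.map (fun t => t ^ 2)).sum := by
      apply Multiset.sum_nonneg
      intro x hx
      obtain ⟨y, _, rfl⟩ := Multiset.mem_map.1 hx
      positivity
    refine mul_ne_zero ?_ (ih ?_)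
    · simp
      intro hh
      have : t * s = 1 := by linarith
      have h2 : s ^ 2 * t ^ 2 = 1 := by rw [← mul_pow, mul_comm, this]; norm_num
      nlinarith [mul_nonneg (sq_nonneg s) hnn]
    · nlinarith [mul_nonneg (sq_nonneg s) (sq_nonneg t)]

theorem root_bounds {p : Polynomial ℝ} (hr : RealRooted p) (h0 : p.coeff 0 ≠ 0) (s : ℝ) :
    p.eval s ^ 2 ≤ p.coeff 0 ^ 2 * Real.exp (2 * s * (p.coeff 1 / p.coeff 0)
      + s ^ 2 * ((p.coeff 1 / p.coeff 0) ^ 2 - 2 * (p.coeff 2 / p.coeff 0))) ∧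
    (s ^ 2 * ((p.coeff 1 / p.coeff 0) ^ 2 - 2 * (p.coeff 2 / p.coeff 0)) < 1 → p.eval s ≠ 0) := by
  obtain ⟨T, hT⟩ := root_repr _ p le_rfl hr h0
  set P := (T.map (fun t => 1 - Polynomial.C t * Polynomial.X)).prod with hP
  obtain ⟨-, h1, h2⟩ := prod_coeffs T
  rw [← hP] at h1 h2
  have c1 : p.coeff 1 / p.coeff 0 = P.coeff 1 := by
    have hh : p.coeff 1 = p.coeff 0 * P.coeff 1 := by
      conv_lhs => rw [hT]
      simp
    rw [hh]
    field_simp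
  have c2 : p.coeff 2 / p.coeff 0 = P.coeff 2 := by
    have hh : p.coeff 2 = p.coeff 0 * P.coeff 2 := by
      conv_lhs => rw [hT]
      simp
    rw [hh]
    field_simp
  have hev : p.eval s = p.coeff 0 * P.eval s := by
    conv_lhs => rw [hT]
    simp
  rw [c1, c2, h2, h1, hev]
  refine ⟨?_, fun hs => mul_ne_zero h0 (prod_ne T s hs)⟩
  rw [mul_pow]
  exact mul_le_mul_of_nonneg_left (prod_bound T s) (sq_nonneg _)

theorem coeff_poly (v e ξ : Fin n → ℝ) (k : ℕ) : ∃ b : Polynomial ℝ, ∀ ε : ℝ,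
    (linePoly h (v + ε • e) ξ).coeff k = b.eval ε := by
  let Q : Polynomial (Polynomial ℝ) := aeval (fun i =>
    Polynomial.C (Polynomial.C (v i) + Polynomial.C (e i) * Polynomial.X)
      + Polynomial.C (Polynomial.C (ξ i)) * Polynomial.X) h
  refine ⟨Q.coeff k, fun ε => ?_⟩
  have hQ : linePoly h (v + ε • e) ξ = Polynomial.mapAlgHom (Polynomial.aeval ε) Q := by
    simp only [Q, linePoly]
    rw [← AlgHom.comp_apply, MvPolynomial.comp_aeval]
    congr 2
    ext1 i
    simp
    ring
  rw [hQ]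
  simp [Polynomial.coeff_map, Polynomial.coe_aeval_eq_eval]

theorem flat_dir (hhom : h.IsHomogeneous d) (hhyp : IsHyperbolic h e) (hpos : 0 < eval e h)
    {v ξ : Fin n → ℝ} (hv : v ∈ hypCone h e) (h0 : eval v h = 0) (hs : 0 < D1 h v e)
    (h1 : D1 h v ξ = 0) (h2 : 0 ≤ D2 h v ξ) :
    (∀ s : ℝ, eval (v + s • ξ) h = 0) ∧ ∃ s0 > 0, ∀ s : ℝ, |s| < s0 → v + s • ξ ∈ hypCone h e := by
  obtain ⟨b0, hb0⟩ := coeff_poly (h := h) v e ξ 0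
  obtain ⟨b1, hb1⟩ := coeff_poly (h := h) v e ξ 1
  obtain ⟨b2, hb2⟩ := coeff_poly (h := h) v e ξ 2
  have hb0l : b0 = linePoly h v e := by
    apply Polynomial.funext; intro t
    rw [← hb0, linePoly_coeff_zero, linePoly_eval]
  have dec : ∀ (b : Polynomial ℝ) (ε : ℝ), b.eval ε = b.eval 0 + ε * b.divX.eval ε := by
    intro b ε
    conv_lhs => rw [← Polynomial.divX_mul_X_add b]
    rw [← Polynomial.coeff_zero_eq_eval_zero]
    simp
    ring
  have z0 : b0.eval 0 = 0 := by rw [hb0l, linePoly_eval]; simpa using h0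
  have z1 : b1.eval 0 = 0 := by rw [← hb1]; simpa [D1] using h1
  have z2 : b2.eval 0 = D2 h v ξ := by rw [← hb2]; simp [D2]
  set β := b0.divX with hβ
  set γ := b1.divX with hγ
  set ζ := b2.divX with hζ
  have hβ0 : 0 < β.eval 0 := by
    rw [← Polynomial.coeff_zero_eq_eval_zero, hβ, Polynomial.coeff_divX, hb0l]
    exact hs
  have e0 : ∀ ε, b0.eval ε = ε * β.eval ε := fun ε => by rw [dec, z0, zero_add]
  have e1 : ∀ ε, b1.eval ε = ε * γ.eval ε := fun ε => by rw [dec, z1, zero_add]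
  have e2 : ∀ ε, b2.eval ε = D2 h v ξ + ε * ζ.eval ε := fun ε => by rw [dec, z2]
  let σ : ℝ → ℝ := fun ε => γ.eval ε / β.eval ε
  let μ : ℝ → ℝ := fun ε => (γ.eval ε / β.eval ε) ^ 2 - 2 * (ζ.eval ε / β.eval ε)
  have hσc : ContinuousAt σ 0 := γ.continuous.continuousAt.div β.continuous.continuousAt hβ0.ne'
  have hμc : ContinuousAt μ 0 := (hσc.pow 2).sub
    ((ζ.continuous.continuousAt.div β.continuous.continuousAt hβ0.ne').const_mul 2)
  have key : ∀ ε : ℝ, 0 < ε → ∀ s : ℝ,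
      eval (v + ε • e + s • ξ) h ^ 2 ≤ (ε * β.eval ε) ^ 2 * Real.exp (2 * s * σ ε + s ^ 2 * μ ε) ∧
      (s ^ 2 * μ ε < 1 → eval (v + ε • e + s • ξ) h ≠ 0) := by
    intro ε hε s
    have hb : 0 < b0.eval ε := by
      rw [hb0l, linePoly_eval]; exact cone_pos hhom hhyp hpos hv hε
    have hβp : 0 < β.eval ε := by
      rw [e0] at hb; exact pos_of_mul_pos_right hb hε.le
    have hrr := (cone_hypDir hhom hhyp hv hε).realRooted hhom ξ
    have hB := root_bounds hrr (by rw [hb0]; exact hb.ne') s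
    rw [hb0, hb1, hb2, e0, e1, e2, linePoly_eval] at hB
    have q1 : ε * γ.eval ε / (ε * β.eval ε) = σ ε := by
      simp only [σ]; field_simp
    rw [q1] at hB
    have q2 : σ ε ^ 2 - 2 * ((D2 h v ξ + ε * ζ.eval ε) / (ε * β.eval ε)) ≤ μ ε := by
      have : (D2 h v ξ + ε * ζ.eval ε) / (ε * β.eval ε)
          = D2 h v ξ / (ε * β.eval ε) + ζ.eval ε / β.eval ε := by field_simp
      rw [this]
      have : 0 ≤ D2 h v ξ / (ε * β.eval ε) := by positivity
      simp only [μ, σ]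
      linarith
    have q3 := mul_le_mul_of_nonneg_left q2 (sq_nonneg s)
    refine ⟨hB.1.trans ?_, fun hh => hB.2 (by linarith)⟩
    gcongr
  constructor
  · intro s
    have hl : Filter.Tendsto (fun ε : ℝ => eval (v + ε • e + s • ξ) h ^ 2)
        (nhdsWithin 0 (Set.Ioi 0)) (nhds (eval (v + s • ξ) h ^ 2)) := by
      have : Continuous fun ε : ℝ => eval (v + ε • e + s • ξ) h ^ 2 :=
        (continuous_h.comp (by fun_prop)).pow 2
      have h3 := this.tendsto 0
      simp only [zero_smul, add_zero] at h3
      exact h3.mono_left nhdsWithin_le_nhds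
    have hr : Filter.Tendsto
        (fun ε : ℝ => (ε * β.eval ε) ^ 2 * Real.exp (2 * s * σ ε + s ^ 2 * μ ε))
        (nhdsWithin 0 (Set.Ioi 0)) (nhds 0) := by
      have : ContinuousAt
          (fun ε : ℝ => (ε * β.eval ε) ^ 2 * Real.exp (2 * s * σ ε + s ^ 2 * μ ε)) 0 :=
        ((continuousAt_id.mul β.continuous.continuousAt).pow 2).mul
          (Real.continuous_exp.continuousAt.comp
            ((hσc.const_mul _).add (hμc.const_mul _)))
      have h3 := this.tendsto
      simp only [zero_mul] at h3
      norm_num at h3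
      exact h3.mono_left nhdsWithin_le_nhds
    have hle := le_of_tendsto_of_tendsto hl hr (by
      filter_upwards [self_mem_nhdsWithin] with ε hε
      exact (key ε hε s).1)
    have := le_antisymm hle (sq_nonneg _)
    exact pow_eq_zero_iff (two_ne_zero) |>.1 this
  · set M := |μ 0| + 1 with hM
    have hMp : 0 < M := by positivity
    have hev : ∀ᶠ ε in nhds (0 : ℝ), μ ε < M :=
      hμc.eventually_lt continuousAt_const (by
        have := le_abs_self (μ 0); simp only [hM]; linarith)
    obtain ⟨ε0, hε0, hball⟩ := Metric.eventually_nhds_iff.1 hev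
    have hop := isOpen_late hhom e (half_pos hε0) hhyp.1
    have hvm : v ∈ {x : Fin n → ℝ | ∀ t : ℝ, ε0 / 2 ≤ t → eval (x + t • e) h ≠ 0} := by
      intro t ht
      exact (mem_hypCone_iff hhyp).1 hv t (by linarith)
    have hc : Filter.Tendsto (fun s : ℝ => v + s • ξ) (nhds 0) (nhds v) := by
      have : Continuous fun s : ℝ => v + s • ξ := by fun_prop
      have h2 := this.tendsto 0
      simpa using h2
    obtain ⟨s1, hs1, hb⟩ := Metric.mem_nhds_iff.1 (hc (hop.mem_nhds hvm))
    refine ⟨min s1 (min 1 M⁻¹), by positivity, fun s hss => ?_⟩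
    rw [mem_hypCone_iff hhyp]
    intro t ht
    rcases le_or_gt (ε0 / 2) t with htt | htt
    · exact hb (by simpa using hss.trans_le (min_le_left _ _)) t htt
    · have := (key t ht s).2 (by
        have hm : μ t < M := hball (by
          simp [abs_of_pos ht]; linarith)
        have a1 : |s| < 1 := hss.trans_le ((min_le_right _ _).trans (min_le_left _ _))
        have a2 : |s| < M⁻¹ := hss.trans_le ((min_le_right _ _).trans (min_le_right _ _))
        have a3 : s ^ 2 ≤ |s| := by
          rw [← sq_abs]; nlinarith [abs_nonneg s]
        have a4 : |s| * M < 1 := by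
          rw [← inv_mul_cancel₀ hMp.ne']
          exact mul_lt_mul_of_pos_right a2 hMp
        have a5 : s ^ 2 * μ t ≤ s ^ 2 * M := mul_le_mul_of_nonneg_left hm.le (sq_nonneg _)
        have a6 : s ^ 2 * M ≤ |s| * M := mul_le_mul_of_nonneg_right a3 hMp.le
        linarith)
      have hh : v + s • ξ + t • e = v + t • e + s • ξ := by abel
      rw [hh]; exact this

theorem closed_zero {P : ℝ → Prop} (hc : IsClosed {s | P s}) (hp : ∀ s : ℝ, 0 < s → P s) : P 0 := by
  have h1 : closure (Set.Ioi (0 : ℝ)) ⊆ {s | P s} := closure_minimal (fun s hs => hp s hs) hc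
  rw [closure_Ioi] at h1
  exact h1 (Set.mem_Ici.2 le_rfl)

theorem strict_dir (hhom : h.IsHomogeneous d) (hhyp : IsHyperbolic h e) (hpos : 0 < eval e h)
    (hd : 2 ≤ d) (hsm : ∀ a ∈ hypCone h e, eval a h = 0 → a ≠ 0 → 0 < D1 h a e)
    {v ξ : Fin n → ℝ} (hv : v ∈ hypCone h e) (h0 : eval v h = 0) (hξ : ξ ≠ 0)
    (hne : ∀ s : ℝ, v + s • ξ ≠ 0) (h1 : D1 h v ξ = 0) : D2 h v ξ < 0 := by
  by_contra! h2
  have hv0 : v ≠ 0 := by simpa using hne 0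
  obtain ⟨hA, s0, hs0, hB⟩ := flat_dir hhom hhyp hpos hv h0 (hsm v hv h0 hv0) h1 h2
  have hl : ∀ s : ℝ, linePoly h (v + s • ξ) ξ = 0 := by
    intro s
    apply Polynomial.funext
    intro t
    rw [linePoly_eval, add_assoc, ← add_smul, hA]
    simp
  have hI : {s : ℝ | v + s • ξ ∈ hypCone h e} = Set.univ := by
    apply IsClopen.eq_univ
    · constructor
      · exact (cone_closed hhom hhyp).preimage (by fun_prop : Continuous fun s : ℝ => v + s • ξ)
      · rw [Metric.isOpen_iff]
        intro s hs
        obtain ⟨-, s1, hs1, hb⟩ := flat_dir (ξ := ξ) hhom hhyp hpos hs (hA s)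
          (hsm _ hs (hA s) (hne s)) (by simp [D1, hl]) (by simp [D2, hl])
        refine ⟨s1, hs1, fun t ht => ?_⟩
        have := hb (t - s) (by simpa [Real.dist_eq] using ht)
        have h3 : v + s • ξ + (t - s) • ξ = v + t • ξ := by module
        rw [h3] at this
        exact this
    · exact ⟨0, by simpa using hv⟩
  have hall : ∀ s : ℝ, v + s • ξ ∈ hypCone h e := by
    intro s
    have : s ∈ {s : ℝ | v + s • ξ ∈ hypCone h e} := by rw [hI]; trivial
    exact this
  have hlim : ∀ r : ℝ, r • ξ ∈ hypCone h e ∧ eval (r • ξ) h = 0 := by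
    intro r
    have := closed_zero (P := fun s => s • v + r • ξ ∈ hypCone h e ∧ eval (s • v + r • ξ) h = 0)
      (by
        apply IsClosed.inter
        · exact (cone_closed hhom hhyp).preimage
            (by fun_prop : Continuous fun s : ℝ => s • v + r • ξ)
        · exact isClosed_singleton.preimage
            (continuous_h.comp (by fun_prop : Continuous fun s : ℝ => s • v + r • ξ)))
      (by
        intro s hs
        have h3 : s • v + r • ξ = s • (v + (s⁻¹ * r) • ξ) := by
          rw [smul_add, smul_smul, mul_inv_cancel_left₀ hs.ne']
        rw [h3, eval_hom hhom, hA]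
        exact ⟨cone_smul hhom hhyp (hall _) hs, by simp⟩)
    simpa using this
  have hp1 : ξ ∈ hypCone h e := by simpa using (hlim 1).1
  have hp2 : -ξ ∈ hypCone h e := by simpa using (hlim (-1)).1
  have hz : eval ξ h = 0 := by simpa using (hlim 1).2
  have hD := hsm ξ hp1 hz hξ
  set p := linePoly h ξ e with hp
  have hroot : ∀ z : ℂ, Polynomial.aeval z p = 0 → z = 0 := by
    intro z hzz
    rw [hp, linePoly_aeval] at hzz
    have r1 := hp1 (-z) (by
      rw [linePoly_aeval, ← hzz]
      congr 2
      ext i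
      simp)
    have r2 := hp2 z (by
      rw [linePoly_aeval]
      have := aeval_hom (A := ℂ) hhom (-1) (fun i => (ξ i : ℂ) + (e i : ℂ) * z)
      rw [hzz, mul_zero] at this
      rw [← this]
      congr 2
      ext i
      simp
      ring)
    apply Complex.ext
    · have := r1.2
      have := r2.2
      simp at *
      linarith
    · exact r2.1
  have hpq : p = p.divX * Polynomial.X := by
    conv_lhs => rw [← Polynomial.divX_mul_X_add p]
    rw [hp, linePoly_coeff_zero, hz]
    simp
  have hq0 : p.divX.coeff 0 ≠ 0 := by
    rw [Polynomial.coeff_divX]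
    exact hD.ne'
  have hdeg : p.divX.degree = 0 := by
    by_contra hdd
    obtain ⟨z, hzz⟩ := IsAlgClosed.exists_aeval_eq_zero ℂ p.divX hdd
    have hz0 : z = 0 := hroot z (by rw [hpq, map_mul, hzz, zero_mul])
    rw [hz0, ← Polynomial.coeff_zero_eq_aeval_zero'] at hzz
    apply hq0
    simpa using hzz
  obtain ⟨c, hc⟩ : ∃ c, p.divX = Polynomial.C c := ⟨_, Polynomial.eq_C_of_degree_eq_zero hdeg⟩
  have hev : ∀ t : ℝ, eval (ξ + t • e) h = c * t := by
    intro t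
    rw [← linePoly_eval, ← hp, hpq, hc]
    simp
  have hfin := closed_zero (P := fun s => eval (s • ξ + e) h = c * s ^ (d - 1))
    (isClosed_eq (continuous_h.comp (by fun_prop)) (by fun_prop)) (by
      intro s hs
      have h3 : s • ξ + e = s • (ξ + s⁻¹ • e) := by
        rw [smul_add, smul_smul, mul_inv_cancel₀ hs.ne', one_smul]
      rw [h3, eval_hom hhom, hev]
      obtain ⟨k, rfl⟩ : ∃ k, d = k + 1 := ⟨d - 1, by omega⟩
      rw [pow_succ]
      simp
      field_simp)
  apply hhyp.1
  rw [zero_smul, zero_add, zero_pow (by omega), mul_zero] at hfin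
  exact hfin

end roots

section quads
variable {n : ℕ}

/-- Squared Euclidean length. -/
def nsq {n : ℕ} (ξ : Fin n → ℝ) : ℝ := ∑ a, ξ a * ξ a

theorem nsq_nonneg (ξ : Fin n → ℝ) : 0 ≤ nsq ξ := Finset.sum_nonneg fun _ _ => mul_self_nonneg _

theorem nsq_smul (ξ : Fin n → ℝ) (r : ℝ) : nsq (r • ξ) = r ^ 2 * nsq ξ := by
  unfold nsq
  rw [Finset.mul_sum]
  exact Finset.sum_congr rfl fun a _ => by simp; ring

theorem nsq_continuous : Continuous (nsq : (Fin n → ℝ) → ℝ) := by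
  unfold nsq; fun_prop

theorem eq_zero_of_nsq {ξ : Fin n → ℝ} (hz : nsq ξ = 0) : ξ = 0 := by
  funext a
  have := (Finset.sum_eq_zero_iff_of_nonneg (fun a _ => mul_self_nonneg (ξ a))).1 hz a
    (Finset.mem_univ a)
  simpa using this

theorem isCompact_sph : IsCompact {ξ : Fin n → ℝ | nsq ξ = 1} := by
  apply Metric.isCompact_of_isClosed_isBounded
  · exact isClosed_singleton.preimage nsq_continuous
  · rw [isBounded_iff_forall_norm_le]
    refine ⟨1, fun ξ hξ => ?_⟩
    rw [pi_norm_le_iff_of_nonneg zero_le_one]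
    intro a
    have h1 : ξ a * ξ a ≤ nsq ξ :=
      Finset.single_le_sum (f := fun a => ξ a * ξ a) (fun b _ => mul_self_nonneg _)
        (Finset.mem_univ a)
    have h2 : nsq ξ = 1 := hξ
    rw [Real.norm_eq_abs]
    rw [h2] at h1
    exact abs_le_one_iff_mul_self_le_one.2 h1

/-- From the sphere to everything. -/
theorem sph_extend {F : (Fin n → ℝ) → ℝ} (hF : ∀ r ξ, F (r • ξ) = r ^ 2 * F ξ) {b : ℝ}
    (hs : ∀ ξ, nsq ξ = 1 → F ξ ≤ b) (ξ : Fin n → ℝ) : F ξ ≤ b * nsq ξ := by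
  by_cases hz : nsq ξ = 0
  · have h1 := eq_zero_of_nsq hz
    have h2 := hF 0 ξ
    rw [hz]
    simp [h1] at h2
    simp [h1, h2]
  · have hp : 0 < nsq ξ := lt_of_le_of_ne (nsq_nonneg ξ) (Ne.symm hz)
    have hsq : (Real.sqrt (nsq ξ)) ^ 2 = nsq ξ := Real.sq_sqrt hp.le
    have hs0 : 0 < Real.sqrt (nsq ξ) := Real.sqrt_pos.2 hp
    have h1 := hs ((Real.sqrt (nsq ξ))⁻¹ • ξ) (by
      rw [nsq_smul, inv_pow, hsq, inv_mul_cancel₀ hz])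
    rw [hF, inv_pow, hsq, inv_mul_le_iff₀ hp] at h1
    linarith

theorem finsler {A B : (Fin n → ℝ) → ℝ} (hA : Continuous A) (hB : Continuous B)
    (hAs : ∀ r ξ, A (r • ξ) = r ^ 2 * A ξ) (hBs : ∀ r ξ, B (r • ξ) = r ^ 2 * B ξ)
    (hB0 : ∀ ξ, 0 ≤ B ξ) (hAB : ∀ ξ, ξ ≠ 0 → B ξ = 0 → A ξ < 0) :
    ∃ c : ℝ, 0 ≤ c ∧ ∃ δ : ℝ, 0 < δ ∧ ∀ ξ, A ξ - c * B ξ ≤ - δ * nsq ξ := by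
  let U : ℕ → Set (Fin n → ℝ) := fun N => {ξ | A ξ - N * B ξ < - (1 / ((N : ℝ) + 1))}
  have hU : ∀ N, IsOpen (U N) := fun N => isOpen_lt (by fun_prop) continuous_const
  have hmono : Monotone U := by
    intro N M hNM ξ hξ
    have h1 : (N : ℝ) ≤ M := by exact_mod_cast hNM
    have h2 := Nat.one_div_le_one_div (α := ℝ) hNM
    have h3 := mul_le_mul_of_nonneg_right h1 (hB0 ξ)
    simp only [U, Set.mem_ofPred_eq] at *
    linarith
  have hcov : {ξ : Fin n → ℝ | nsq ξ = 1} ⊆ ⋃ N, U N := by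
    intro ξ hξ
    rw [Set.mem_iUnion]
    have hne : ξ ≠ 0 := by
      rintro rfl
      simp [nsq] at hξ
    rcases (hB0 ξ).eq_or_lt with hb | hb
    · have ha := hAB ξ hne hb.symm
      obtain ⟨N, hN⟩ := exists_nat_one_div_lt (show (0 : ℝ) < - A ξ by linarith)
      refine ⟨N, ?_⟩
      simp only [U, Set.mem_ofPred_eq, ← hb]
      linarith
    · obtain ⟨N, hN⟩ := exists_nat_gt ((A ξ + 1) / B ξ)
      refine ⟨N, ?_⟩
      rw [div_lt_iff₀ hb] at hN
      have : 1 / ((N : ℝ) + 1) ≤ 1 := by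
        rw [div_le_one (by positivity)]; linarith [Nat.cast_nonneg (α := ℝ) N]
      simp only [U, Set.mem_ofPred_eq]
      linarith
  obtain ⟨N, hN⟩ := isCompact_sph.elim_directed_cover U hU hcov (hmono.directed_le)
  refine ⟨N, Nat.cast_nonneg N, 1 / ((N : ℝ) + 1), by positivity, fun ξ => ?_⟩
  refine sph_extend (F := fun ξ => A ξ - N * B ξ) (fun r ξ => ?_) (fun ξ hξ => (hN hξ).le) ξ
  simp only [hAs, hBs]; ring

theorem quad_add (B C : Matrix (Fin n) (Fin n) ℝ) (ξ : Fin n → ℝ) :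
    quad (B + C) ξ = quad B ξ + quad C ξ := by
  simp [quad, add_mul, Finset.sum_add_distrib]

theorem quad_msmul (B : Matrix (Fin n) (Fin n) ℝ) (r : ℝ) (ξ : Fin n → ℝ) :
    quad (r • B) ξ = r * quad B ξ := by
  simp [quad, mul_assoc, Finset.mul_sum]

theorem quad_zero (ξ : Fin n → ℝ) : quad (0 : Matrix (Fin n) (Fin n) ℝ) ξ = 0 := by
  simp [quad]

theorem quad_sum {ι : Type} (s : Finset ι) (B : ι → Matrix (Fin n) (Fin n) ℝ) (ξ : Fin n → ℝ) :
    quad (∑ k ∈ s, B k) ξ = ∑ k ∈ s, quad (B k) ξ := by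
  classical
  induction s using Finset.induction_on with
  | empty => simp [quad_zero]
  | insert a s ha ih => rw [Finset.sum_insert ha, Finset.sum_insert ha, quad_add, ih]

theorem quad_one (ξ : Fin n → ℝ) : quad (1 : Matrix (Fin n) (Fin n) ℝ) ξ = nsq ξ := by
  simp [quad, nsq, Matrix.one_apply]

theorem quad_outer (φ : (Fin n → ℝ) →ₗ[ℝ] ℝ) :
    ∃ B : Matrix (Fin n) (Fin n) ℝ, ∀ ξ, quad B ξ = φ ξ ^ 2 := by
  refine ⟨fun a b => φ (Pi.single a 1) * φ (Pi.single b 1), fun ξ => ?_⟩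
  have h1 : φ ξ = ∑ a, ξ a * φ (Pi.single a 1) := by
    conv_lhs => rw [LinearMap.pi_apply_eq_sum_univ φ ξ]
    simp only [smul_eq_mul]
    refine Finset.sum_congr rfl fun a _ => ?_
    congr 2
    funext j
    simp [Pi.single_apply, eq_comm]
  rw [h1, sq, Finset.sum_mul_sum]
  unfold quad
  exact Finset.sum_congr rfl fun a _ => Finset.sum_congr rfl fun b _ => by ring

theorem quad_dot (B : Matrix (Fin n) (Fin n) ℝ) (ξ : Fin n → ℝ) :
    quad B ξ = ξ ⬝ᵥ (B.mulVec ξ) := by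
  simp only [quad, dotProduct, Matrix.mulVec, Finset.mul_sum]
  exact Finset.sum_congr rfl fun a _ => Finset.sum_congr rfl fun b _ => by ring

theorem quad_comp (B : Matrix (Fin n) (Fin n) ℝ) (L : (Fin n → ℝ) →ₗ[ℝ] (Fin n → ℝ)) :
    ∃ B' : Matrix (Fin n) (Fin n) ℝ, ∀ ξ, quad B' ξ = quad B (L ξ) := by
  refine ⟨(LinearMap.toMatrix' L).transpose * B * LinearMap.toMatrix' L, fun ξ => ?_⟩
  have hL : L ξ = (LinearMap.toMatrix' L).mulVec ξ := by
    rw [LinearMap.toMatrix'_mulVec]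
  rw [quad_dot, quad_dot, hL, ← Matrix.mulVec_mulVec, ← Matrix.mulVec_mulVec,
    Matrix.dotProduct_mulVec, Matrix.vecMul_transpose]

theorem quad_near {C : (Fin n → ℝ) → Matrix (Fin n) (Fin n) ℝ} (hC : Continuous C)
    {v : Fin n → ℝ} {b : ℝ} (hb : ∀ ξ, nsq ξ = 1 → quad (C v) ξ < b) :
    ∀ᶠ u in nhds v, ∀ ξ, quad (C u) ξ ≤ b * nsq ξ := by
  have h1 : ∀ᶠ u in nhds v, ∀ ξ ∈ {ξ : Fin n → ℝ | nsq ξ = 1}, quad (C u) ξ < b := by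
    refine isCompact_sph.eventually_forall_of_forall_eventually fun ξ hξ => ?_
    have hc : Continuous fun p : (Fin n → ℝ) × (Fin n → ℝ) => quad (C p.1) p.2 :=
      quad_continuous (hC.comp continuous_fst) continuous_snd
    exact (isOpen_lt hc continuous_const).mem_nhds (hb ξ hξ)
  filter_upwards [h1] with u hu ξ
  exact sph_extend (fun r ξ => quad_smul _ _ _) (fun ξ hξ => (hu ξ hξ).le) ξ

/-- Weighted lifting. -/
theorem weight_lift {J : Type} [Fintype J] (φ : (Fin n → ℝ) →ₗ[ℝ] ℝ) (Q : Set (Fin n → ℝ))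
    (w : J → (Fin n → ℝ) → ℝ) (hw : ∀ j, ∀ x ∈ Q, 0 ≤ w j x) :
    ∃ T : Set (Fin n → ℝ), Shd T ∧ (∀ x, 0 < φ x → (φ x)⁻¹ • x ∈ Q → x ∈ T) ∧
      ∀ (l : (Fin n → ℝ) →ₗ[ℝ] ℝ) (B : J → Matrix (Fin n) (Fin n) ℝ),
        (∀ j ξ, 0 ≤ quad (B j) ξ) → (∀ x ∈ Q, l x = ∑ j, w j x * quad (B j) x) →
        ∀ x ∈ T, 0 ≤ l x := by
  obtain ⟨T, hT, hKT, hl⟩ := Shd.lift (J := J) {x : Fin n → ℝ | 0 < φ x ∧ (φ x)⁻¹ • x ∈ Q}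
    (fun j x => (φ x * w j ((φ x)⁻¹ • x)) •
      Matrix.vecMulVec ((φ x)⁻¹ • x) ((φ x)⁻¹ • x)) (by
      intro j x hx
      have h1 := Matrix.posSemidef_vecMulVec_self_star ((φ x)⁻¹ • x)
      rw [star_trivial] at h1
      exact h1.smul (mul_nonneg hx.1.le (hw j _ hx.2)))
  refine ⟨T, hT, fun x h1 h2 => hKT ⟨h1, h2⟩, fun l B hB hlx x hx => ?_⟩
  refine hl l B hB (fun x hx => ?_) x hx
  have h1 := hlx _ hx.2
  rw [map_smul, smul_eq_mul, inv_mul_eq_iff_eq_mul₀ hx.1.ne'] at h1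
  rw [h1, Finset.mul_sum]
  refine Finset.sum_congr rfl fun j _ => ?_
  simp only [quad, Finset.mul_sum, Matrix.smul_apply, Matrix.vecMulVec_apply, smul_eq_mul]
  exact Finset.sum_congr rfl fun a _ => Finset.sum_congr rfl fun b _ => by ring

end quads

section loc
variable {n d : ℕ} {h : MvPolynomial (Fin n) ℝ} {e : Fin n → ℝ}

theorem D1_continuous_right (u : Fin n → ℝ) : Continuous fun ξ => D1 h u ξ := by
  obtain ⟨ι, _, m, c, g, hm, hc, hg, h1, h2, h3⟩ := taylor h
  simp only [h1]
  fun_prop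

theorem D1_continuous_left (ξ : Fin n → ℝ) : Continuous fun u => D1 h u ξ := by
  obtain ⟨ι, _, m, c, g, hm, hc, hg, h1, h2, h3⟩ := taylor h
  simp only [h1]
  fun_prop

set_option maxHeartbeats 1600000 in
theorem local_cert (hhom : h.IsHomogeneous d) (hhyp : IsHyperbolic h e) (hpos : 0 < eval e h)
    (hd : 2 ≤ d) (hsm : ∀ a ∈ hypCone h e, eval a h = 0 → a ≠ 0 → 0 < D1 h a e)
    {v : Fin n → ℝ} (hv : v ∈ hypCone h e) (h0 : eval v h = 0)
    (φ : (Fin n → ℝ) →ₗ[ℝ] ℝ) (hφ : φ v = 1) :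
    ∃ (J : Type) (_ : Fintype J) (w : J → (Fin n → ℝ) → ℝ),
      (∀ᶠ x in nhds v, x ∈ hypCone h e → ∀ j, 0 ≤ w j x) ∧
      (∀ᶠ u in nhds v, φ u = 1 → eval u h = 0 →
        ∃ B : J → Matrix (Fin n) (Fin n) ℝ, (∀ j ξ, 0 ≤ quad (B j) ξ) ∧
          ∀ x, φ x = 1 → D1 h u x = ∑ j, w j x * quad (B j) x) := by
  have hφc : Continuous φ := LinearMap.continuous_of_finiteDimensional φ
  have hD1c : Continuous fun ξ => D1 h v ξ :=
    D1_continuous_right v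
  obtain ⟨c, hc, δ, hδ, hfin⟩ := finsler (A := fun ξ => D2 h v ξ)
    (B := fun ξ => D1 h v ξ ^ 2 + φ ξ ^ 2) (D2_continuous v) ((hD1c.pow 2).add (hφc.pow 2))
    (fun r ξ => D2_smul _ _ _) (fun r ξ => by simp only [D1_smul, map_smul, smul_eq_mul]; ring)
    (fun ξ => by positivity) (by
      intro ξ hξ hB
      have hB1 : D1 h v ξ = 0 := by nlinarith [sq_nonneg (D1 h v ξ), sq_nonneg (φ ξ)]
      have hB2 : φ ξ = 0 := by nlinarith [sq_nonneg (D1 h v ξ), sq_nonneg (φ ξ)]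
      refine strict_dir hhom hhyp hpos hd hsm hv h0 hξ (fun s hs => ?_) hB1
      have := congrArg φ hs
      simp [hφ, hB2] at this)
  set q := h + C (-c) * (h * h) with hq
  have q1 : ∀ u ξ, eval u h = 0 → D1 q u ξ = D1 h u ξ := by
    intro u ξ hu
    have : (linePoly h u ξ).coeff 0 = 0 := by rw [linePoly_coeff_zero, hu]
    simp only [D1, hq, linePoly_add, linePoly_mul, linePoly_C, Polynomial.coeff_add,
      Polynomial.coeff_C_mul, Polynomial.mul_coeff_one, Polynomial.mul_coeff_zero, this]
    ring
  have q2 : ∀ ξ, D2 q v ξ = D2 h v ξ - c * D1 h v ξ ^ 2 := by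
    intro ξ
    have : (linePoly h v ξ).coeff 0 = 0 := by rw [linePoly_coeff_zero, h0]
    simp only [D1, D2, hq, linePoly_add, linePoly_mul, linePoly_C, Polynomial.coeff_add,
      Polynomial.coeff_C_mul, coeff_two_mul, this]
    ring
  have qe : ∀ x, eval x q = eval x h * (1 - c * eval x h) := by
    intro x; simp [hq]; ring
  obtain ⟨ι, _, m, cc, g, hm, hcc, -, -, t2, t3⟩ := taylor q
  obtain ⟨Bφ, hBφ⟩ := quad_outer φ
  -- the comparison form
  let S : (Fin n → ℝ) → Matrix (Fin n) (Fin n) ℝ := fun u => (∑ k, m k v • cc k u) + (-c) • Bφ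
  have hS : ∀ u ξ, quad (S u) ξ = (∑ k, m k v * quad (cc k u) ξ) - c * φ ξ ^ 2 := by
    intro u ξ
    simp only [S, quad_add, quad_sum, quad_msmul, hBφ]
    ring
  have hSc : Continuous S :=
    Continuous.add (continuous_finsetSum Finset.univ fun k _ => (hcc k).const_smul (m k v))
      (continuous_const (y := (-c) • Bφ))
  have ev1 := quad_near (C := S) hSc (v := v) (b := -(δ / 2)) (by
    intro ξ hξ
    have h1 := hfin ξ
    rw [hS, ← t2, q2]
    simp only [hξ] at h1
    linarith)
  -- bound for the matrices
  have hM : ∃ M : ℝ, 0 < M ∧ ∀ k ξ, nsq ξ = 1 → |quad (cc k v) ξ| < M := by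
    have h1 : ∀ k, ∃ M, ∀ ξ ∈ {ξ : Fin n → ℝ | nsq ξ = 1}, ‖quad (cc k v) ξ‖ ≤ M := fun k =>
      isCompact_sph.exists_bound_of_continuousOn
        (quad_continuous continuous_const continuous_id).continuousOn
    choose M hM using h1
    refine ⟨∑ k, |M k| + 1, by positivity, fun k ξ hξ => ?_⟩
    have h2 := hM k ξ hξ
    have h3 : |M k| ≤ ∑ k, |M k| :=
      Finset.single_le_sum (f := fun k => |M k|) (fun _ _ => abs_nonneg _) (Finset.mem_univ k)
    have h4 := le_abs_self (M k)
    rw [Real.norm_eq_abs] at h2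
    linarith
  obtain ⟨M, hM0, hM⟩ := hM
  have ev2 : ∀ᶠ u in nhds v, ∀ k ξ, quad (cc k u) ξ ≤ M * nsq ξ := by
    rw [Filter.eventually_all]
    intro k
    exact quad_near (hcc k) fun ξ hξ => lt_of_le_of_lt (le_abs_self _) (hM k ξ hξ)
  have ev3 : ∀ᶠ u in nhds v, ∀ k ξ, quad ((-1 : ℝ) • cc k u) ξ ≤ M * nsq ξ := by
    rw [Filter.eventually_all]
    intro k
    refine quad_near (C := fun u => (-1 : ℝ) • cc k u) ((hcc k).const_smul (-1 : ℝ)) fun ξ hξ => ?_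
    rw [quad_msmul]
    have := hM k ξ hξ
    have := neg_abs_le (quad (cc k v) ξ)
    linarith
  set N : ℝ := (Fintype.card ι : ℝ) with hN
  have hN0 : 0 ≤ N := Nat.cast_nonneg _
  obtain ⟨η, hη, hηM⟩ : ∃ η : ℝ, 0 < η ∧ N * η * M ≤ δ / 2 := by
    refine ⟨δ / (2 * ((N + 1) * M)), by positivity, ?_⟩
    have : N * (δ / (2 * ((N + 1) * M))) * M = (N / (N + 1)) * (δ / 2) := by
      field_simp
    rw [this]
    have h2 : N / (N + 1) ≤ 1 := by rw [div_le_one (by positivity)]; linarith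
    nlinarith
  refine ⟨Unit ⊕ (Unit ⊕ (ι ⊕ ι)), inferInstance,
    Sum.elim (fun _ x => eval x q) (Sum.elim (fun _ _ => 1)
      (Sum.elim (fun k x => η + (m k x - m k v)) (fun k x => η - (m k x - m k v)))), ?_, ?_⟩
  · have f1 : ∀ᶠ x in nhds v, ∀ k, |m k x - m k v| < η := by
      rw [Filter.eventually_all]
      intro k
      have := (hm k).tendsto v
      rw [Metric.tendsto_nhds] at this
      exact this η hη
    have f2 : ∀ᶠ x in nhds v, 0 < 1 - c * eval x h := by
      have hcont : Continuous fun x => 1 - c * eval x h := by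
        have := continuous_h (h := h)
        fun_prop
      refine (isOpen_lt continuous_const hcont).mem_nhds ?_
      simp [h0]
    filter_upwards [f1, f2] with x hx1 hx2 hx
    rintro (_ | _ | k | k)
    · simp only [Sum.elim_inl, qe]
      exact mul_nonneg (cone_nonneg hhom hhyp hpos hx) hx2.le
    · simp
    · simp only [Sum.elim_inl, Sum.elim_inr]
      have := neg_abs_le (m k x - m k v)
      linarith [hx1 k]
    · simp only [Sum.elim_inr]
      have := le_abs_self (m k x - m k v)
      linarith [hx1 k]
  · filter_upwards [ev1, ev2, ev3] with u hu1 hu2 hu3 hφu hu0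
    let L : (Fin n → ℝ) →ₗ[ℝ] (Fin n → ℝ) := LinearMap.id - φ.smulRight u
    have hL : ∀ x, φ x = 1 → L x = x - u := by
      intro x hx
      simp [L, hx]
    obtain ⟨B1, hB1⟩ := quad_comp ((-1 : ℝ) • S u + (-(N * η * M)) • 1) L
    have hk1 : ∀ k, ∃ B, ∀ ξ, quad B ξ = quad ((1 / 2 : ℝ) • (M • 1 + (-1 : ℝ) • cc k u)) (L ξ) :=
      fun k => quad_comp _ L
    have hk2 : ∀ k, ∃ B, ∀ ξ, quad B ξ = quad ((1 / 2 : ℝ) • (M • 1 + cc k u)) (L ξ) :=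
      fun k => quad_comp _ L
    choose B2 hB2 using hk1
    choose B3 hB3 using hk2
    refine ⟨Sum.elim (fun _ => Bφ) (Sum.elim (fun _ => B1) (Sum.elim B2 B3)), ?_, ?_⟩
    · rintro (_ | _ | k | k) ξ
      · simp only [Sum.elim_inl, hBφ]; positivity
      · simp only [Sum.elim_inl, Sum.elim_inr, hB1, quad_add, quad_msmul, quad_one]
        have a1 := hu1 (L ξ)
        have a2 := mul_le_mul_of_nonneg_right hηM (nsq_nonneg (L ξ))
        linarith
      · simp only [Sum.elim_inl, Sum.elim_inr, hB2, quad_add, quad_msmul, quad_one]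
        have a1 := hu2 k (L ξ)
        linarith
      · simp only [Sum.elim_inr, hB3, quad_add, quad_msmul, quad_one]
        have a1 := hu3 k (L ξ)
        rw [quad_msmul] at a1
        linarith
    · intro x hx
      simp only [Fintype.sum_sum_type, Sum.elim_inl, Sum.elim_inr, Finset.univ_unique,
        Finset.sum_singleton, hBφ, hB1, hB2, hB3, hL x hx, hx, quad_add, quad_msmul, quad_one, hS]
      have hφξ : φ (x - u) = 0 := by rw [map_sub, hx, hφu, sub_self]
      rw [hφξ]
      have e1 : D1 h u x = D1 h u (x - u) := by
        have a1 := D1_add (h := h) u (x - u) u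
        rw [sub_add_cancel, D1_self hhom hu0, add_zero] at a1
        exact a1
      have e2 := t3 u x
      rw [qe u, hu0, q1 u _ hu0] at e2
      rw [e1]
      set ξ := x - u with hξ
      have e3 : ∑ k, (η + (m k x - m k v)) * (1 / 2 * (M * nsq ξ + -1 * quad (cc k u) ξ))
          + ∑ k, (η - (m k x - m k v)) * (1 / 2 * (M * nsq ξ + quad (cc k u) ξ))
          = N * (η * M * nsq ξ) - ∑ k, m k x * quad (cc k u) ξ
            + ∑ k, m k v * quad (cc k u) ξ := by
        have a1 : N * (η * M * nsq ξ) = ∑ k : ι, η * M * nsq ξ := by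
          rw [Finset.sum_const, nsmul_eq_mul, Finset.card_univ]
        rw [a1, ← Finset.sum_add_distrib, ← Finset.sum_sub_distrib, ← Finset.sum_add_distrib]
        exact Finset.sum_congr rfl fun k _ => by ring
      rw [e3]
      linear_combination -e2

end loc

section loc2
variable {n d : ℕ} {h : MvPolynomial (Fin n) ℝ} {e : Fin n → ℝ}

theorem local_shadow (hhom : h.IsHomogeneous d) (hhyp : IsHyperbolic h e) (hpos : 0 < eval e h)
    (hd : 2 ≤ d) (hsm : ∀ a ∈ hypCone h e, eval a h = 0 → a ≠ 0 → 0 < D1 h a e)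
    {v : Fin n → ℝ} (hv : v ∈ hypCone h e) (h0 : eval v h = 0) (hv0 : v ≠ 0) :
    ∃ T : Set (Fin n → ℝ), Shd T ∧ T ⊆ hypCone h e ∧ ∃ U ∈ nhds v, U ∩ hypCone h e ⊆ T := by
  obtain ⟨φ, hφ⟩ : ∃ φ : (Fin n → ℝ) →ₗ[ℝ] ℝ, φ v = 1 := by
    obtain ⟨i, hi⟩ := Function.ne_iff.1 hv0
    refine ⟨(v i)⁻¹ • LinearMap.proj i, ?_⟩
    simp only [LinearMap.smul_apply, LinearMap.proj_apply, smul_eq_mul]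
    exact inv_mul_cancel₀ hi
  have hφc : Continuous φ := LinearMap.continuous_of_finiteDimensional φ
  obtain ⟨J, _, w, hw, hcert⟩ := local_cert hhom hhyp hpos hd hsm hv h0 φ hφ
  obtain ⟨Bφ, hBφ⟩ := quad_outer φ
  have hBφ0 : ∀ ξ, 0 ≤ quad Bφ ξ := fun ξ => by rw [hBφ]; positivity
  -- normalization is continuous at `v`
  have hnorm : Filter.Tendsto (fun y : Fin n → ℝ => (φ y)⁻¹ • y) (nhds v) (nhds v) := by
    have h1 : ContinuousAt (fun y : Fin n → ℝ => (φ y)⁻¹ • y) v :=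
      (hφc.continuousAt.inv₀ (by rw [hφ]; exact one_ne_zero)).smul continuousAt_id
    have h2 := h1.tendsto
    simpa [hφ] using h2
  have hφpos : ∀ᶠ y in nhds v, 0 < φ y :=
    (isOpen_lt continuous_const hφc).mem_nhds (by simp [hφ])
  have hDpos : ∀ᶠ u in nhds v, 0 < D1 h u e :=
    (isOpen_lt continuous_const (D1_continuous_left e)).mem_nhds (hsm v hv h0 hv0)
  have hy := hφpos.and (hnorm.eventually (hcert.and hDpos))
  have hxt : Filter.Tendsto (fun p : (Fin n → ℝ) × ℝ => p.1 + p.2 • e) (nhds (v, 0)) (nhds v) := by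
    have h1 : Continuous fun p : (Fin n → ℝ) × ℝ => p.1 + p.2 • e := by fun_prop
    have h2 := h1.tendsto (v, 0)
    simpa using h2
  obtain ⟨ρ, hρ, hball⟩ := Metric.eventually_nhds_iff.1 (hxt.eventually hy)
  have hlate : ∀ᶠ x in nhds v, ∀ t : ℝ, ρ / 2 ≤ t → eval (x + t • e) h ≠ 0 :=
    (isOpen_late hhom e (half_pos hρ) hhyp.1).mem_nhds (fun t ht =>
      (mem_hypCone_iff hhyp).1 hv t (by linarith))
  obtain ⟨r0, hr0, hb0⟩ := Metric.eventually_nhds_iff.1 (hw.and hlate)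
  obtain ⟨r, hr, hrr0, hrρ⟩ : ∃ r : ℝ, 0 < r ∧ r < r0 ∧ r < ρ :=
    ⟨min r0 ρ / 2, by positivity, by
      have := min_le_left r0 ρ; have : 0 < min r0 ρ := by positivity
      linarith, by
      have := min_le_right r0 ρ; have : 0 < min r0 ρ := by positivity
      linarith⟩
  let Q : Set (Fin n → ℝ) := {x | x ∈ hypCone h e ∧ φ x = 1 ∧ dist x v ≤ r}
  obtain ⟨T, hT, hQT, hl⟩ := weight_lift (J := J ⊕ (Unit ⊕ (Fin n ⊕ Fin n))) φ Q
    (Sum.elim w (Sum.elim (fun _ _ => 1)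
      (Sum.elim (fun i x => r + (x i - v i)) (fun i x => r - (x i - v i))))) (by
      rintro (j | _ | i | i) x hx
      · exact (hb0 (hx.2.2.trans_lt hrr0)).1 hx.1 j
      · simp
      · have h1 := (dist_le_pi_dist x v i).trans hx.2.2
        rw [Real.dist_eq] at h1
        simp only [Sum.elim_inl, Sum.elim_inr]
        linarith [(abs_le.1 h1).1]
      · have h1 := (dist_le_pi_dist x v i).trans hx.2.2
        rw [Real.dist_eq] at h1
        simp only [Sum.elim_inr]
        linarith [(abs_le.1 h1).2])
  refine ⟨T, hT, ?_, ?_⟩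
  · intro x hx
    have p1 : 0 ≤ φ x := by
      refine hl φ (Sum.elim (fun _ => 0) (Sum.elim (fun _ => Bφ) (fun _ => 0))) ?_ ?_ x hx
      · rintro (j | _ | i | i) ξ <;> simp [quad_zero, hBφ0]
      · intro y hy
        simp [quad_zero, hBφ, hy.2.1]
    have p2 : ∀ i, 0 ≤ r * φ x + (x i - v i * φ x) := by
      intro i
      refine hl (r • φ + (LinearMap.proj i - v i • φ))
        (Sum.elim (fun _ => 0) (Sum.elim (fun _ => 0) (Sum.elim
          (fun k => if k = i then Bφ else 0) (fun _ => 0)))) ?_ ?_ x hx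
      · rintro (j | _ | k | k) ξ <;> simp [quad_zero]
        split_ifs <;> simp [quad_zero, hBφ0]
      · intro y hy
        have : ∀ k : Fin n, quad (if k = i then Bφ else 0) y = if k = i then 1 else 0 := by
          intro k
          split_ifs <;> simp [quad_zero, hBφ, hy.2.1]
        simp [quad_zero, hy.2.1, this]
    have p3 : ∀ i, 0 ≤ r * φ x - (x i - v i * φ x) := by
      intro i
      refine hl (r • φ - (LinearMap.proj i - v i • φ))
        (Sum.elim (fun _ => 0) (Sum.elim (fun _ => 0) (Sum.elim (fun _ => 0)
          (fun k => if k = i then Bφ else 0)))) ?_ ?_ x hx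
      · rintro (j | _ | k | k) ξ <;> simp [quad_zero]
        split_ifs <;> simp [quad_zero, hBφ0]
      · intro y hy
        have : ∀ k : Fin n, quad (if k = i then Bφ else 0) y = if k = i then 1 else 0 := by
          intro k
          split_ifs <;> simp [quad_zero, hBφ, hy.2.1]
        simp [quad_zero, hy.2.1, this]
    rcases p1.eq_or_lt with hz | hp
    · have : x = 0 := by
        funext i
        have a1 := p2 i
        have a2 := p3 i
        rw [← hz] at a1 a2
        simp only [mul_zero, zero_add, sub_zero] at a1 a2
        simp only [Pi.zero_apply]
        linarith
      rw [this]
      exact cone_zero hhom hhyp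
    set y := (φ x)⁻¹ • x with hydef
    have hxy : x = φ x • y := by
      rw [hydef, smul_smul, mul_inv_cancel₀ hp.ne', one_smul]
    have hyv : dist y v ≤ r := by
      rw [dist_pi_le_iff hr.le]
      intro i
      have a1 := p2 i
      have a2 := p3 i
      have a3 : x i = φ x * y i := by
        conv_lhs => rw [hxy]
        simp
      rw [a3] at a1 a2
      rw [Real.dist_eq, abs_le]
      constructor <;> nlinarith
    rw [hxy]
    refine cone_smul hhom hhyp ?_ hp
    rw [mem_hypCone_iff hhyp]
    intro t ht hzero
    have htρ : t < ρ / 2 := by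
      by_contra! hh
      exact (hb0 (hyv.trans_lt hrr0)).2 t hh hzero
    obtain ⟨b1, b2, b3⟩ := hball (y := (y, t)) (by
      rw [Prod.dist_eq]
      refine max_lt (hyv.trans_lt hrρ) ?_
      rw [Real.dist_eq, sub_zero, abs_of_pos ht]
      linarith)
    simp only at b1 b2 b3
    set z := y + t • e with hzdef
    set u := (φ z)⁻¹ • z with hu
    have hφu : φ u = 1 := by rw [hu, map_smul, smul_eq_mul, inv_mul_cancel₀ b1.ne']
    have hu0 : eval u h = 0 := by rw [hu, eval_hom hhom, hzero, mul_zero]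
    obtain ⟨B, hB1, hB2⟩ := b2 hφu hu0
    let l : (Fin n → ℝ) →ₗ[ℝ] ℝ :=
      { toFun := fun x => D1 h u x
        map_add' := fun x y => D1_add u x y
        map_smul' := fun r x => D1_smul u x r }
    have hlx : 0 ≤ l x := by
      refine hl l (Sum.elim B (fun _ => 0)) ?_ ?_ x hx
      · rintro (j | j) ξ
        · exact hB1 j ξ
        · simp [quad_zero]
      · intro y hy
        have := hB2 y hy.2.1
        simp only [Fintype.sum_sum_type, Sum.elim_inl, Sum.elim_inr, quad_zero, mul_zero,
          Finset.sum_const_zero, add_zero]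
        exact this
    have hly : 0 ≤ D1 h u y := by
      have : l x = φ x * D1 h u y := by
        conv_lhs => rw [hxy]
        exact D1_smul u y (φ x)
      rw [this] at hlx
      exact nonneg_of_mul_nonneg_right hlx hp
    have hz1 : D1 h u z = 0 := by
      have : z = φ z • u := by rw [hu, smul_smul, mul_inv_cancel₀ b1.ne', one_smul]
      rw [this, D1_smul, D1_self hhom hu0, mul_zero]
    have hz2 : D1 h u z = D1 h u y + t * D1 h u e := by
      rw [← D1_smul]; exact D1_add u y (t • e)
    nlinarith [mul_pos ht b3]
  · have hcl : ∀ᶠ x in nhds v, dist x v ≤ r := by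
      filter_upwards [Metric.closedBall_mem_nhds v hr] with x hx
      exact hx
    refine ⟨_, hφpos.and (hnorm.eventually hcl), ?_⟩
    rintro x ⟨⟨hx1, hx2⟩, hx⟩
    refine hQT x hx1 ⟨cone_smul hhom hhyp hx (inv_pos.2 hx1), ?_, hx2⟩
    rw [map_smul, smul_eq_mul, inv_mul_cancel₀ hx1.ne']

end loc2

section fin
variable {n d : ℕ} {h : MvPolynomial (Fin n) ℝ} {e : Fin n → ℝ}

theorem mult_one {a : Fin n → ℝ} (hm : multAt h a = 1) : ∃ w, D1 h a w ≠ 0 := by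
  set G := MvPolynomial.aeval (fun i => MvPolynomial.X i + MvPolynomial.C (a i)) h with hG
  have h1 : homogeneousComponent 1 G ≠ 0 := by
    have hne : {m | homogeneousComponent m G ≠ 0}.Nonempty :=
      Nat.nonempty_of_sInf_eq_succ (k := 0) hm
    have h2 := Nat.sInf_mem hne
    have h3 : sInf {m | homogeneousComponent m G ≠ 0} = 1 := hm
    rw [h3] at h2
    exact h2
  obtain ⟨w, hw⟩ : ∃ w, eval w (homogeneousComponent 1 G) ≠ 0 := by
    by_contra! hh
    exact h1 (MvPolynomial.funext fun w => by rw [hh]; simp)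
  refine ⟨w, ?_⟩
  have hl : linePoly h a w
      = aeval (fun i => (Polynomial.X : Polynomial ℝ) * Polynomial.C (w i)) G := by
    rw [hG, ← AlgHom.comp_apply, MvPolynomial.comp_aeval]
    unfold linePoly
    congr 2
    ext1 i
    simp only [map_add, aeval_X, aeval_C, Polynomial.algebraMap_eq]
    ring
  have hterm : ∀ k, aeval (fun i => (Polynomial.X : Polynomial ℝ) * Polynomial.C (w i))
      (homogeneousComponent k G)
      = Polynomial.X ^ k * Polynomial.C (eval w (homogeneousComponent k G)) := by
    intro k
    rw [aeval_hom (homogeneousComponent_isHomogeneous k G)]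
    congr 1
    rw [← MvPolynomial.coe_aeval_eq_eval]
    exact MvPolynomial.aeval_algebraMap_apply (Polynomial ℝ) w _
  have hco : D1 h a w = eval w (homogeneousComponent 1 G) := by
    unfold D1
    rw [hl]
    conv_lhs => rw [← sum_homogeneousComponent G]
    rw [map_sum, Polynomial.finsetSum_coeff]
    simp only [hterm, Polynomial.coeff_mul_C, Polynomial.coeff_X_pow]
    simp only [ite_mul, one_mul, zero_mul]
    rw [Finset.sum_ite_eq]
    split_ifs with hmem
    · rfl
    · rw [homogeneousComponent_eq_zero]
      · simp
      · simp at hmem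
        omega
  rw [hco]
  exact hw

theorem neg_linePoly (a v : Fin n → ℝ) : linePoly (-h) a v = - linePoly h a v := by
  simp [linePoly]

theorem neg_cone : hypCone (-h) e = hypCone h e := by
  ext a
  simp only [hypCone, NonnegRealRooted, neg_linePoly, Set.mem_ofPred_eq, map_neg, neg_eq_zero]

theorem neg_hyp (hhyp : IsHyperbolic h e) : IsHyperbolic (-h) e := by
  refine ⟨by simpa using hhyp.1, fun a z hz => hhyp.2 a z ?_⟩
  rwa [neg_linePoly, map_neg, neg_eq_zero] at hz

theorem neg_D1 (a w : Fin n → ℝ) : D1 (-h) a w = - D1 h a w := by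
  simp [D1, neg_linePoly]

theorem main_pos (hhom : h.IsHomogeneous d) (hhyp : IsHyperbolic h e) (hpos : 0 < eval e h)
    (hsm : ∀ a ∈ hypCone h e, eval a h = 0 → a ≠ 0 → ∃ w, D1 h a w ≠ 0) :
    IsSpectrahedralShadowCone (hypCone h e) := by
  have hsm' : ∀ a ∈ hypCone h e, eval a h = 0 → a ≠ 0 → 0 < D1 h a e := fun a ha h0 hne =>
    smooth_pos hhom hhyp hpos ha h0 (hsm a ha h0 hne)
  rcases Nat.lt_or_ge d 2 with hd | hd
  · interval_cases d
    · -- degree zero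
      have : hypCone h e = {x | 0 ≤ (0 : (Fin n → ℝ) →ₗ[ℝ] ℝ) x} := by
        ext x
        simp only [LinearMap.zero_apply, le_refl, Set.mem_ofPred_eq, iff_true]
        rw [mem_hypCone_iff hhyp]
        intro t ht
        have hc : ∀ y : Fin n → ℝ, eval y h = eval 0 h := by
          intro y
          have := eval_hom hhom 0 y
          simpa using this.symm
        rw [hc, ← hc e]
        exact hpos.ne'
      rw [this]
      exact (Shd.halfSpace _).toCone
    · -- degree one
      have hev : ∀ x, eval x h = D1 h 0 x := by
        intro x
        have hl : linePoly h 0 x = Polynomial.C (eval x h) * Polynomial.X := by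
          apply Polynomial.funext
          intro t
          rw [linePoly_eval, zero_add, eval_hom hhom, Polynomial.eval_mul, Polynomial.eval_C,
            Polynomial.eval_X, pow_one, mul_comm]
        rw [D1, hl]
        simp
      let ψ : (Fin n → ℝ) →ₗ[ℝ] ℝ :=
        { toFun := fun x => D1 h 0 x
          map_add' := fun x y => D1_add 0 x y
          map_smul' := fun r x => D1_smul 0 x r }
      have hψ : ∀ x, ψ x = eval x h := fun x => (hev x).symm
      have : hypCone h e = {x | 0 ≤ ψ x} := by
        ext x
        constructor
        · intro hx
          change 0 ≤ ψ x
          rw [hψ]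
          exact cone_nonneg hhom hhyp hpos hx
        · intro hx
          have hx' : 0 ≤ ψ x := hx
          rw [mem_hypCone_iff hhyp]
          intro t ht
          rw [← hψ, map_add, map_smul, hψ e, smul_eq_mul]
          have := mul_pos ht hpos
          exact (by linarith : 0 < ψ x + t * eval e h).ne'
      rw [this]
      exact (Shd.halfSpace _).toCone
  · -- degree at least two
    have hcl := cone_closed hhom hhyp
    let Bd : Set (Fin n → ℝ) := {x | x ∈ hypCone h e ∧ eval x h = 0 ∧ ‖x‖ = 1}
    have hBc : IsCompact Bd := by
      apply Metric.isCompact_of_isClosed_isBounded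
      · exact hcl.inter ((isClosed_singleton.preimage continuous_h).inter
          (isClosed_singleton.preimage continuous_norm))
      · rw [isBounded_iff_forall_norm_le]
        exact ⟨1, fun x hx => hx.2.2.le⟩
    have hray : {x : Fin n → ℝ | ∃ t : ℝ, 0 ≤ t ∧ x = t • e} ⊆ hypCone h e := by
      rintro x ⟨t, ht, rfl⟩
      rcases ht.eq_or_lt with rfl | ht'
      · simpa using cone_zero hhom hhyp
      · exact cone_smul hhom hhyp (cone_e hhom hhyp) ht'
    have hind : ∃ S : Set (Fin n → ℝ), Shd S ∧ S ⊆ hypCone h e ∧ Bd ∩ hypCone h e ⊆ S := by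
      refine hBc.induction_on
        (p := fun s => ∃ S : Set (Fin n → ℝ), Shd S ∧ S ⊆ hypCone h e ∧ s ∩ hypCone h e ⊆ S)
        ⟨_, Shd.ray e, hray, by simp⟩ ?_ ?_ ?_
      · rintro s t hst ⟨S, h1, h2, h3⟩
        exact ⟨S, h1, h2, fun x hx => h3 ⟨hst hx.1, hx.2⟩⟩
      · rintro s t ⟨S, h1, h2, h3⟩ ⟨S', h1', h2', h3'⟩
        refine ⟨_, h1.add h1', ?_, ?_⟩
        · rintro z ⟨x, hx, y, hy, rfl⟩
          exact cone_add hhom hhyp (h2 hx) (h2' hy)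
        · rintro x ⟨hx | hx, hxc⟩
          · exact ⟨x, h3 ⟨hx, hxc⟩, 0, h1'.zero_mem, by simp⟩
          · exact ⟨0, h1.zero_mem, x, h3' ⟨hx, hxc⟩, by simp⟩
      · intro v hv
        have hv0 : v ≠ 0 := by
          rintro rfl
          have := hv.2.2
          simp at this
        obtain ⟨T, hT, hTc, U, hU, hUT⟩ := local_shadow hhom hhyp hpos hd hsm' hv.1 hv.2.1 hv0
        exact ⟨U, mem_nhdsWithin_of_mem_nhds hU, T, hT, hTc, hUT⟩
    obtain ⟨S, hS, hSc, hBS⟩ := hind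
    have heq : hypCone h e = {z | ∃ x ∈ S, ∃ y ∈ {x : Fin n → ℝ | ∃ t : ℝ, 0 ≤ t ∧ x = t • e},
        z = x + y} := by
      apply Set.Subset.antisymm
      · intro x hx
        -- maximal `t` with `x - t e` in the cone
        let I : Set ℝ := {t | 0 ≤ t ∧ x - t • e ∈ hypCone h e}
        have hIc : IsClosed I := isClosed_Ici.inter
          (hcl.preimage (by fun_prop : Continuous fun t : ℝ => x - t • e))
        have hI0 : (0 : ℝ) ∈ I := ⟨le_rfl, by simpa using hx⟩
        have hz : eval (0 : Fin n → ℝ) h = 0 := by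
          have := eval_hom hhom 0 (0 : Fin n → ℝ)
          rw [zero_pow (by omega)] at this
          simpa using this
        have hIb : BddAbove I := by
          have hne : -e ∉ hypCone h e := by
            intro hne
            apply (mem_hypCone_iff hhyp).1 hne 1 one_pos
            simpa using hz
          have hnh : ∀ᶠ s in nhds (0 : ℝ), s • x - e ∉ hypCone h e := by
            have hc : Continuous fun s : ℝ => s • x - e := by fun_prop
            have h2 := hc.tendsto 0
            simp only [zero_smul, zero_sub] at h2
            exact h2.eventually (hcl.isOpen_compl.mem_nhds hne)
          obtain ⟨ρ, hρ, hb⟩ := Metric.eventually_nhds_iff.1 hnh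
          refine ⟨2 / ρ, fun t ht => ?_⟩
          by_contra! hlt
          have ht0 : 0 < t := lt_trans (by positivity) hlt
          refine hb (y := t⁻¹) ?_ ?_
          · rw [Real.dist_eq, sub_zero, abs_of_pos (inv_pos.2 ht0)]
            rw [div_lt_iff₀ hρ] at hlt
            rw [inv_lt_iff_one_lt_mul₀ ht0]
            linarith
          · have := cone_smul hhom hhyp ht.2 (inv_pos.2 ht0)
            rwa [smul_sub, smul_smul, inv_mul_cancel₀ ht0.ne', one_smul] at this
        have hmax := hIc.csSup_mem ⟨0, hI0⟩ hIb
        set t := sSup I with ht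
        set y := x - t • e with hy
        have hxy : x = y + t • e := by rw [hy]; abel
        have hy0 : eval y h = 0 := by
          by_contra hne
          have hnh := cone_interior hhom hhyp hmax.2 hne
          have hc : Continuous fun s : ℝ => y - s • e := by fun_prop
          have h2 := hc.tendsto 0
          simp only [zero_smul, sub_zero] at h2
          obtain ⟨ρ, hρ, hb⟩ := Metric.mem_nhds_iff.1 (h2 hnh)
          have h3 : y - (ρ / 2) • e ∈ hypCone h e := hb (by
            rw [Metric.mem_ball, Real.dist_eq, sub_zero, abs_of_pos (by positivity)]; linarith)
          have h4 : t + ρ / 2 ∈ I := by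
            refine ⟨by have := hmax.1; positivity, ?_⟩
            have : x - (t + ρ / 2) • e = y - (ρ / 2) • e := by rw [hy]; module
            rw [this]; exact h3
          have := le_csSup hIb h4
          linarith
        refine ⟨y, ?_, t • e, ⟨t, hmax.1, rfl⟩, hxy⟩
        by_cases hyz : y = 0
        · rw [hyz]; exact hS.zero_mem
        · have hn : 0 < ‖y‖ := norm_pos_iff.2 hyz
          have hm : ‖y‖⁻¹ • y ∈ hypCone h e := cone_smul hhom hhyp hmax.2 (inv_pos.2 hn)
          have h5 : ‖y‖⁻¹ • y ∈ S := by
            refine hBS ⟨⟨hm, ?_, ?_⟩, hm⟩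
            · rw [eval_hom hhom, hy0, mul_zero]
            · rw [norm_smul, norm_inv, norm_norm, inv_mul_cancel₀ hn.ne']
          have h6 := hS.smul_mem h5 hn.le
          rwa [smul_smul, mul_inv_cancel₀ hn.ne', one_smul] at h6
      · rintro z ⟨x, hx, y, hy, rfl⟩
        exact cone_add hhom hhyp (hSc hx) (hray hy)
    rw [heq]
    exact (hS.add (Shd.ray e)).toCone

end fin

/-- If `h` is homogeneous and hyperbolic with respect to `e`, and every
non-zero boundary point of the hyperbolicity cone `Λ_e(h)` is a smooth point of `h`
(multiplicity 1), then `Λ_e(h)` is a spectrahedral shadow. -/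
theorem smooth_hyperbolicity_cone_is_spectrahedral_shadow
    {n d : ℕ} (h : MvPolynomial (Fin n) ℝ) (e : Fin n → ℝ)
    (hhom : h.IsHomogeneous d) (hhyp : IsHyperbolic h e)
    (hsmooth : ∀ a ∈ frontier (hypCone h e), a ≠ 0 → multAt h a = 1) :
    IsSpectrahedralShadowCone (hypCone h e) := by
  have hsm : ∀ a ∈ hypCone h e, eval a h = 0 → a ≠ 0 → ∃ w, D1 h a w ≠ 0 :=
    fun a ha h0 hne => mult_one (hsmooth a (cone_frontier hhyp ha h0) hne)
  rcases lt_or_gt_of_ne hhyp.1 with hneg | hpos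
  · have hm := main_pos (h := -h) (e := e) hhom.neg (neg_hyp hhyp) (by simpa using hneg)
      (fun a ha h0 hne => by
        rw [neg_cone] at ha
        obtain ⟨w, hw⟩ := hsm a ha (by simpa using h0) hne
        exact ⟨w, by rw [neg_D1]; exact neg_ne_zero.2 hw⟩)
    rw [neg_cone] at hm
    exact hm
  · exact main_pos hhom hhyp hpos hsm
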